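/- In the tower construction with D := ⋃_{n≥1} Dₙ and 𝓜 := ⋃_{n≥2} 𝓜ₙ, one has D = ⋂ { D_q : q ∈ Spec(D), q ≠ 𝓜 }, the intersection taken inside the quotient field K of D; consequently D is an essential domain (each such D_q being a valuation domain), while its localization D_𝓜 = A is not essential, and dim(D) = dim_v(D) = r. -/

import Mathlib

/- Preamble: the tower construction of Fontana–Kabbaj (Example 3.1).
All rings are realized as subsets/subrings of one ambient field `Amb k0 r`:
the rational function field over `k0` in the indeterminates
`X₁, X₂, …` (indexed by `ℕ`), `Y`, and `Z₁, …, Z_{r-1}`. -/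

noncomputable section

open Polynomial

/-- Index type for the indeterminates: `Sum.inl n` is `Xₙ`, `Sum.inr (Sum.inl ())` is `Y`,
and `Sum.inr (Sum.inr i)` is `Z_{i+1}`. -/
abbrev TowerVars (r : ℕ) : Type := ℕ ⊕ (Unit ⊕ Fin (r - 1))

/-- The ambient field: the fraction field of the polynomial ring over `k0` in all the
indeterminates. -/
abbrev Amb (k0 : Type) [Field k0] (r : ℕ) : Type :=
  FractionRing (MvPolynomial (TowerVars r) k0)

variable (k0 : Type) [Field k0] (r : ℕ)

/-- The indeterminate `Xₙ` as an element of the ambient field. -/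
def ambX (n : ℕ) : Amb k0 r :=
  algebraMap (MvPolynomial (TowerVars r) k0) (Amb k0 r) (MvPolynomial.X (Sum.inl n))

/-- The indeterminate `Y` as an element of the ambient field. -/
def ambY : Amb k0 r :=
  algebraMap (MvPolynomial (TowerVars r) k0) (Amb k0 r) (MvPolynomial.X (Sum.inr (Sum.inl ())))

/-- The indeterminates `Z₁, …, Z_{r-1}` as elements of the ambient field. -/
def ambZ (i : Fin (r - 1)) : Amb k0 r :=
  algebraMap (MvPolynomial (TowerVars r) k0) (Amb k0 r) (MvPolynomial.X (Sum.inr (Sum.inr i)))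

/-- The image of the base field `k0` in the ambient field. -/
def baseSet : Set (Amb k0 r) :=
  Set.range fun c : k0 => algebraMap (MvPolynomial (TowerVars r) k0) (Amb k0 r) (MvPolynomial.C c)

/-- `kₙ := k0(X₁, …, Xₙ)` as a subfield of the ambient field. -/
def kfld (n : ℕ) : Subfield (Amb k0 r) :=
  Subfield.closure (baseSet k0 r ∪ {x | ∃ i, 1 ≤ i ∧ i ≤ n ∧ x = ambX k0 r i})

/-- `Fₙ := kₙ(Z₁, …, Z_{r-1})`. -/
def Ffld (n : ℕ) : Subfield (Amb k0 r) :=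
  Subfield.closure (↑(kfld k0 r n) ∪ Set.range (ambZ k0 r))

/-- `Kₙ := Fₙ(Y)`. -/
def Kfld (n : ℕ) : Subfield (Amb k0 r) :=
  Subfield.closure (↑(Ffld k0 r n) ∪ {ambY k0 r})

/-- The polynomial ring `Fₙ[Y]` as a subring of the ambient field. -/
def polyRing (n : ℕ) : Subring (Amb k0 r) :=
  Subring.closure (↑(Ffld k0 r n) ∪ {ambY k0 r})

/-- `Vₙ := Fₙ[Y]_{(Y)}`, the localization of `Fₙ[Y]` at the prime `(Y)`, as a subset of
the ambient field. -/
def Vset (n : ℕ) : Set (Amb k0 r) :=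
  {x | ∃ f ∈ polyRing k0 r n, ∃ g ∈ polyRing k0 r n,
    (¬ ∃ h ∈ polyRing k0 r n, g = ambY k0 r * h) ∧ x = f / g}

/-- `Mₙ := Y·Fₙ[Y]_{(Y)}`, the maximal ideal of `Vₙ`. -/
def Mset (n : ℕ) : Set (Amb k0 r) :=
  {x | ∃ v ∈ Vset k0 r n, x = ambY k0 r * v}

/-- `Aₙ := kₙ + Mₙ`. -/
def Aset (n : ℕ) : Set (Amb k0 r) :=
  {x | ∃ c ∈ kfld k0 r n, ∃ m ∈ Mset k0 r n, x = c + m}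

/-- `k := ⋃ₙ kₙ` as a subset of the ambient field. -/
def kfldU : Set (Amb k0 r) := ⋃ n, (kfld k0 r n : Set (Amb k0 r))

/-- `F := k(Z₁, …, Z_{r-1}) = ⋃ₙ Fₙ`. -/
def FfldU : Subfield (Amb k0 r) :=
  Subfield.closure (kfldU k0 r ∪ Set.range (ambZ k0 r))

/-- `K := F(Y) = ⋃ₙ Kₙ`. -/
def KfldU : Subfield (Amb k0 r) :=
  Subfield.closure (↑(FfldU k0 r) ∪ {ambY k0 r})

/-- The polynomial ring `F[Y]`. -/
def polyRingU : Subring (Amb k0 r) :=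
  Subring.closure (↑(FfldU k0 r) ∪ {ambY k0 r})

/-- `V := F[Y]_{(Y)}`. -/
def VsetU : Set (Amb k0 r) :=
  {x | ∃ f ∈ polyRingU k0 r, ∃ g ∈ polyRingU k0 r,
    (¬ ∃ h ∈ polyRingU k0 r, g = ambY k0 r * h) ∧ x = f / g}

/-- `M := Y·F[Y]_{(Y)} = ⋃ₙ Mₙ`. -/
def MsetU : Set (Amb k0 r) :=
  {x | ∃ v ∈ VsetU k0 r, x = ambY k0 r * v}

/-- `A := k + M = ⋃ₙ Aₙ`. -/
def AsetU : Set (Amb k0 r) :=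
  {x | ∃ c ∈ kfldU k0 r, ∃ m ∈ MsetU k0 r, x = c + m}

/-- `X′ₙ := (1 + Y·Xₙ)/Y`. -/
def ambX' (n : ℕ) : Amb k0 r :=
  (1 + ambY k0 r * ambX k0 r n) / ambY k0 r

/-- `1` belongs to the ideal of `W` generated by the coefficients of `g`, where `W` is a
subring (given as a subset `S`) of the ambient field. -/
def unitContent (S : Set (Amb k0 r)) (g : Polynomial (Amb k0 r)) : Prop :=
  ∃ (t : Finset ℕ) (u : ℕ → Amb k0 r), (∀ i ∈ t, u i ∈ S) ∧ ∑ i ∈ t, u i * g.coeff i = 1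

/-- The Nagata ring `W(T)` of a subring `W ⊆ Amb k0 r` (given as a subset `S`) in the
"variable" `T`: all fractions `f(T)/g(T)` with `f, g ∈ W[T]` and the coefficients of `g`
generating the unit ideal of `W`.  (When `T` is transcendental over `W` this is the usual
Nagata ring.) -/
def nagataSet (S : Set (Amb k0 r)) (T : Amb k0 r) : Set (Amb k0 r) :=
  {x | ∃ f g : Polynomial (Amb k0 r), (∀ i, f.coeff i ∈ S) ∧ (∀ i, g.coeff i ∈ S) ∧
    unitContent k0 r S g ∧ x = f.eval T / g.eval T}

/-- The valuation overrings of a ring `D` (given as a subset) inside a subfield `L` of the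
ambient field: subrings `W` with `D ⊆ W ⊆ L` such that for every `x ∈ L`, `x ∈ W` or
`x⁻¹ ∈ W`. -/
def valOverringsIn (D : Set (Amb k0 r)) (L : Subfield (Amb k0 r)) : Set (Subring (Amb k0 r)) :=
  {W | D ⊆ ↑W ∧ (W : Set (Amb k0 r)) ⊆ (L : Set (Amb k0 r)) ∧ ∀ x ∈ L, x ∈ W ∨ x⁻¹ ∈ W}

/-- The Kronecker function ring `Kr_{L(T)}(D, b) = ⋂ {W(T) : W a valuation overring of `D`
in `L`}`, realized as a subset of the ambient field. -/
def krSet (D : Set (Amb k0 r)) (L : Subfield (Amb k0 r)) (T : Amb k0 r) : Set (Amb k0 r) :=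
  ⋂ W ∈ valOverringsIn k0 r D L, nagataSet k0 r (↑W) T

/-- The tower `Dₙ`: `D₁ := A₁` and `Dₙ := Bₙ ∩ Aₙ` for `n ≥ 2`, where
`Bₙ := Kr_{K_{n-1}(X′ₙ)}(D_{n-1}, b)`.  (The value at `0` is junk, set to `D₁`.) -/
def Dset : ℕ → Set (Amb k0 r)
  | 0 => Aset k0 r 1
  | 1 => Aset k0 r 1
  | n + 2 => krSet k0 r (Dset (n + 1)) (Kfld k0 r (n + 1)) (ambX' k0 r (n + 2)) ∩ Aset k0 r (n + 2)

/-- `Bₙ := Kr_{K_{n-1}(X′ₙ)}(D_{n-1}, b)` (meaningful for `n ≥ 2`). -/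
def Bset (n : ℕ) : Set (Amb k0 r) :=
  krSet k0 r (Dset k0 r (n - 1)) (Kfld k0 r (n - 1)) (ambX' k0 r n)

/-- `𝓜ₙ := Mₙ ∩ Dₙ`. -/
def MMset (n : ℕ) : Set (Amb k0 r) := Mset k0 r n ∩ Dset k0 r n

/-- `D := ⋃__{n ≥ 1} Dₙ`. -/
def DsetU : Set (Amb k0 r) := ⋃ n, Dset k0 r n

/-- `𝓜 := ⋃_{n ≥ 2} 𝓜ₙ`. -/
def MMsetU : Set (Amb k0 r) := ⋃ n, MMset k0 r (n + 2)

/-- The localization `D_m = {a/b : a, b ∈ D, b ∉ m}` of a subring `D` of the ambient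
field (given as a subset) at (the complement of) a subset `m`. -/
def locAt (D m : Set (Amb k0 r)) : Set (Amb k0 r) :=
  {x | ∃ a ∈ D, ∃ b ∈ D, b ∉ m ∧ x = a / b}

/-- The quotient field, inside the ambient field, of a subring given as a subset. -/
def qfSet (D : Set (Amb k0 r)) : Set (Amb k0 r) :=
  {x | ∃ a ∈ D, ∃ b ∈ D, b ≠ 0 ∧ x = a / b}

/-- The nonunits of a subring of the ambient field, given as a subset: in a local
subring of a field these form the maximal ideal. -/
def nonunitsIn (S : Set (Amb k0 r)) : Set (Amb k0 r) :=
  {x | x ∈ S ∧ (x = 0 ∨ x⁻¹ ∉ S)}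

/-- A subring `A` of the ambient field is a pseudo-valuation domain: it is local, and its
maximal ideal (= set of nonunits) is also the maximal ideal of some valuation overring of
`A` in its quotient field. -/
def IsPVDSub (A : Subring (Amb k0 r)) : Prop :=
  IsLocalRing ↥A ∧
  ∃ W : Subring (Amb k0 r), (A : Set (Amb k0 r)) ⊆ ↑W ∧
    (W : Set (Amb k0 r)) ⊆ qfSet k0 r ↑A ∧
    (∀ x ∈ qfSet k0 r (A : Set (Amb k0 r)), x ∈ W ∨ x⁻¹ ∈ W) ∧
    nonunitsIn k0 r ↑A = nonunitsIn k0 r ↑W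

/-- The valuative dimension of a subring of the ambient field: the supremum of the Krull
dimensions of its valuation overrings (in its quotient field). -/
def subValuativeDim (A : Subring (Amb k0 r)) : WithBot ℕ∞ :=
  ⨆ W : {W : Subring (Amb k0 r) // (A : Set (Amb k0 r)) ⊆ ↑W ∧
      (W : Set (Amb k0 r)) ⊆ qfSet k0 r ↑A ∧
      ∀ x ∈ qfSet k0 r (A : Set (Amb k0 r)), x ∈ W ∨ x⁻¹ ∈ W},
    ringKrullDim ↥(W : Subring (Amb k0 r))


/-- `1` belongs to the ideal generated by the coefficients of a multivariable polynomial
`g` in the subring given by the subset `S`. -/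
def mvUnitContent (S : Set (Amb k0 r)) (g : MvPolynomial ℕ (Amb k0 r)) : Prop :=
  ∃ (t : Finset (ℕ →₀ ℕ)) (u : (ℕ →₀ ℕ) → Amb k0 r),
    (∀ m ∈ t, u m ∈ S) ∧ ∑ m ∈ t, u m * MvPolynomial.coeff m g = 1

/-- The Nagata ring `W(T₀, T₁, …)` of a subring `W` of the ambient field (given as a
subset `S`) in countably many "variables" `T j`: all fractions `f(T)/g(T)` with
`f, g ∈ W[T₀, T₁, …]` and the coefficients of `g` generating the unit ideal of `W`. -/
def nagataSetMv (S : Set (Amb k0 r)) (T : ℕ → Amb k0 r) : Set (Amb k0 r) :=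
  {x | ∃ f g : MvPolynomial ℕ (Amb k0 r),
    (∀ m, MvPolynomial.coeff m f ∈ S) ∧ (∀ m, MvPolynomial.coeff m g ∈ S) ∧
    mvUnitContent k0 r S g ∧ x = MvPolynomial.eval T f / MvPolynomial.eval T g}

/-- A subring `S` of the ambient field is an *essential* domain: `S` is the intersection
of a family of localizations `S_p` at primes `p ∈ Δ`, each of which is a valuation domain
(with quotient field the quotient field of `S`). -/
def IsEssentialSub (S : Subring (Amb k0 r)) : Prop :=
  ∃ Δ : Set (Ideal ↥S),
    (∀ p ∈ Δ, p.IsPrime) ∧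
    (∀ p ∈ Δ, ∀ x ∈ qfSet k0 r (S : Set (Amb k0 r)),
      x ∈ locAt k0 r ↑S (Subtype.val '' (p : Set ↥S)) ∨
      x⁻¹ ∈ locAt k0 r ↑S (Subtype.val '' (p : Set ↥S))) ∧
    (S : Set (Amb k0 r)) = ⋂ p ∈ Δ, locAt k0 r ↑S (Subtype.val '' (p : Set ↥S))

end


open Polynomial

namespace TowerAux

section generic
variable {Ω : Type*} [Field Ω]

/-- `W` is a valuation ring of the subfield `L`. -/
def IsValIn (W : Subring Ω) (L : Subfield Ω) : Prop :=
  (∀ x ∈ W, x ∈ L) ∧ ∀ x ∈ L, x ∈ W ∨ x⁻¹ ∈ W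

/-- Nagata ring as a set. -/
def nag (S : Set Ω) (T : Ω) : Set Ω :=
  {x | ∃ f g : Polynomial Ω, (∀ i, f.coeff i ∈ S) ∧ (∀ i, g.coeff i ∈ S) ∧
    (∃ (t : Finset ℕ) (u : ℕ → Ω), (∀ i ∈ t, u i ∈ S) ∧ ∑ i ∈ t, u i * g.coeff i = 1) ∧
    x = f.eval T / g.eval T}

def Trans (L : Subfield Ω) (T : Ω) : Prop :=
  ∀ f : Polynomial Ω, (∀ i, f.coeff i ∈ L) → f.eval T = 0 → f = 0

theorem IsValIn.max_finset {W : Subring Ω} {L : Subfield Ω} (hW : IsValIn W L) (a : ℕ → Ω)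
    (haL : ∀ i, a i ∈ L) (s : Finset ℕ) (hs : s.Nonempty) (h0 : ∀ i ∈ s, a i ≠ 0) :
    ∃ j ∈ s, ∀ i ∈ s, a i / a j ∈ W := by
  induction hs using Finset.Nonempty.cons_induction with
  | singleton b =>
    refine ⟨b, by simp, ?_⟩
    intro i hi
    obtain rfl := Finset.mem_singleton.mp hi
    rw [div_self (h0 _ hi)]; exact W.one_mem
  | cons b s hb hs ih =>
    obtain ⟨j, hj, h⟩ := ih (fun i hi => h0 i (Finset.mem_cons_of_mem hi))
    have hb0 := h0 b (Finset.mem_cons_self b s)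
    have hj0 := h0 j (Finset.mem_cons_of_mem hj)
    rcases hW.2 (a b / a j) (L.div_mem (haL _) (haL _)) with h1 | h1
    · refine ⟨j, Finset.mem_cons_of_mem hj, fun i hi => ?_⟩
      rcases Finset.mem_cons.mp hi with rfl | hi
      · exact h1
      · exact h i hi
    · refine ⟨b, Finset.mem_cons_self b s, fun i hi => ?_⟩
      rcases Finset.mem_cons.mp hi with rfl | hi
      · rw [div_self hb0]; exact W.one_mem
      · have := W.mul_mem (h i hi) h1
        rw [inv_div, div_mul_div_cancel₀ hj0] at this
        exact this

theorem IsValIn.max_coeff {W : Subring Ω} {L : Subfield Ω} (hW : IsValIn W L) (f : Polynomial Ω)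
    (hf : ∀ i, f.coeff i ∈ L) (h0 : f ≠ 0) :
    ∃ j, f.coeff j ≠ 0 ∧ ∀ i, f.coeff i / f.coeff j ∈ W := by
  obtain ⟨j, hj, h⟩ := hW.max_finset f.coeff hf f.support (Polynomial.support_nonempty.mpr h0)
    (fun i hi => Polynomial.mem_support_iff.mp hi)
  refine ⟨j, Polynomial.mem_support_iff.mp hj, fun i => ?_⟩
  by_cases hi : i ∈ f.support
  · exact h i hi
  · rw [Polynomial.notMem_support_iff.mp hi, zero_div]; exact W.zero_mem

/-- primitive polynomials over `W` -/
def Prim (W : Subring Ω) (g : Polynomial Ω) : Prop :=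
  (∀ i, g.coeff i ∈ W) ∧ ∃ j, g.coeff j = 1

theorem Prim.ne_zero {W : Subring Ω} {g : Polynomial Ω} (h : Prim W g) : g ≠ 0 := by
  rintro rfl
  obtain ⟨_, j, hj⟩ := h
  simp at hj

theorem IsValIn.normalize {W : Subring Ω} {L : Subfield Ω} (hW : IsValIn W L) (f : Polynomial Ω)
    (hf : ∀ i, f.coeff i ∈ L) (h0 : f ≠ 0) :
    ∃ c ∈ L, c ≠ 0 ∧ (∃ j, c = f.coeff j) ∧ Prim W (C c⁻¹ * f) := by
  obtain ⟨j, hj, h⟩ := hW.max_coeff f hf h0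
  refine ⟨f.coeff j, hf j, hj, ⟨j, rfl⟩, fun i => ?_, j, ?_⟩
  · rw [coeff_C_mul, mul_comm, ← div_eq_mul_inv]; exact h i
  · rw [coeff_C_mul, inv_mul_cancel₀ hj]

theorem mem_nag_of_prim {W : Subring Ω} {T x : Ω} (f g : Polynomial Ω) (hf : ∀ i, f.coeff i ∈ W)
    (hg : Prim W g) (hx : x = f.eval T / g.eval T) : x ∈ nag (W : Set Ω) T := by
  obtain ⟨h1, j, hj⟩ := hg
  refine ⟨f, g, hf, h1, ⟨{j}, fun _ => 1, fun _ _ => W.one_mem, ?_⟩, hx⟩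
  simp [hj]

theorem IsValIn.exists_prim {W : Subring Ω} {L : Subfield Ω} (hW : IsValIn W L) {T x : Ω}
    (hx : x ∈ nag (W : Set Ω) T) : ∃ f g : Polynomial Ω, (∀ i, f.coeff i ∈ W) ∧ Prim W g ∧
      x = f.eval T / g.eval T := by
  obtain ⟨f, g, hf, hg, ⟨t, u, hu, hsum⟩, rfl⟩ := hx
  have hg0 : g ≠ 0 := by rintro rfl; simp at hsum
  obtain ⟨j, hj0, hj⟩ := hW.max_coeff g (fun i => hW.1 _ (hg i)) hg0
  have hinv : (g.coeff j)⁻¹ ∈ W := by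
    have : (g.coeff j)⁻¹ = ∑ i ∈ t, u i * (g.coeff i / g.coeff j) := by
      rw [← mul_one (g.coeff j)⁻¹, ← hsum, Finset.mul_sum]
      refine Finset.sum_congr rfl fun i _ => ?_
      field_simp
    rw [this]
    exact W.sum_mem fun i hi => W.mul_mem (hu i hi) (hj i)
  refine ⟨C (g.coeff j)⁻¹ * f, C (g.coeff j)⁻¹ * g, fun i => ?_, ⟨fun i => ?_, j, ?_⟩, ?_⟩
  · rw [coeff_C_mul]; exact W.mul_mem hinv (hf i)
  · rw [coeff_C_mul]; exact W.mul_mem hinv (hg i)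
  · rw [coeff_C_mul, inv_mul_cancel₀ hj0]
  · rw [eval_mul, eval_mul, eval_C, mul_div_mul_left _ _ (inv_ne_zero hj0)]

theorem IsValIn.valuationRing {W : Subring Ω} {L : Subfield Ω} (hW : IsValIn W L) :
    ValuationRing W := by
  refine { cond' := ?_ }
  intro a b
  by_cases ha : (a : Ω) = 0
  · exact ⟨0, Or.inr (by ext; simp [ha])⟩
  by_cases hb : (b : Ω) = 0
  · exact ⟨0, Or.inl (by ext; simp [hb])⟩
  rcases hW.2 ((b : Ω) / a) (L.div_mem (hW.1 _ b.2) (hW.1 _ a.2)) with h | h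
  · exact ⟨⟨_, h⟩, Or.inl (by ext; simp; field_simp)⟩
  · exact ⟨⟨_, h⟩, Or.inr (by ext; simp; field_simp)⟩

theorem IsValIn.prim_mul {W : Subring Ω} {L : Subfield Ω} (hW : IsValIn W L) {g h : Polynomial Ω}
    (hg : Prim W g) (hh : Prim W h) : ∃ j, (g * h).coeff j ≠ 0 ∧ ((g * h).coeff j)⁻¹ ∈ W := by
  have := hW.valuationRing
  obtain ⟨hg1, i, hi⟩ := hg
  obtain ⟨hh1, j, hj⟩ := hh
  obtain ⟨g', rfl⟩ : ∃ g' : Polynomial W, g'.map W.subtype = g := by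
    rw [← Polynomial.mem_lifts, Polynomial.lifts_iff_coeff_lifts]
    intro n; simpa using hg1 n
  obtain ⟨h', rfl⟩ : ∃ g' : Polynomial W, g'.map W.subtype = h := by
    rw [← Polynomial.mem_lifts, Polynomial.lifts_iff_coeff_lifts]
    intro n; simpa using hh1 n
  have hp : ((IsLocalRing.maximalIdeal W).map (C : W →+* W[X])).IsPrime :=
    Ideal.isPrime_map_C_of_isPrime
  by_contra hcon
  push Not at hcon
  have hmem : g' * h' ∈ (IsLocalRing.maximalIdeal W).map (C : W →+* W[X]) := by
    rw [Ideal.mem_map_C_iff]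
    intro n
    rw [IsLocalRing.mem_maximalIdeal, mem_nonunits_iff]
    intro hu
    obtain ⟨u, hu⟩ := hu
    have e : (((g' * h').coeff n : W) : Ω) = ((g'.map W.subtype) * (h'.map W.subtype)).coeff n := by
      rw [← Polynomial.map_mul, Polynomial.coeff_map]; rfl
    have h2 : (((g' * h').coeff n : W) : Ω) * ((u⁻¹ : Wˣ) : W) = 1 := by
      rw [← hu]; exact_mod_cast congrArg Subtype.val (u.mul_inv)
    refine hcon n ?_ ?_
    · rw [← e]; exact left_ne_zero_of_mul_eq_one h2
    · rw [← e, inv_eq_of_mul_eq_one_right h2]; exact Subtype.property _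
  rcases hp.mem_or_mem hmem with h | h
  · rw [Ideal.mem_map_C_iff] at h
    have := h i
    have e : g'.coeff i = 1 := by ext; simpa using hi
    rw [e, IsLocalRing.mem_maximalIdeal] at this
    exact this isUnit_one
  · rw [Ideal.mem_map_C_iff] at h
    have := h j
    have e : h'.coeff j = 1 := by ext; simpa using hj
    rw [e, IsLocalRing.mem_maximalIdeal] at this
    exact this isUnit_one

theorem IsValIn.mem_nag_of_mul {W : Subring Ω} {L : Subfield Ω} (hW : IsValIn W L)
    {g h f : Polynomial Ω} {T x : Ω} (hf : ∀ i, f.coeff i ∈ W)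
    (hg : Prim W g) (hh : Prim W h) (hx : x = f.eval T / (g * h).eval T) :
    x ∈ nag (W : Set Ω) T := by
  obtain ⟨j, hj0, hj⟩ := hW.prim_mul hg hh
  refine ⟨f, g * h, hf, ?_, ⟨{j}, fun _ => ((g * h).coeff j)⁻¹, fun _ _ => hj, ?_⟩, hx⟩
  · intro i
    rw [coeff_mul]
    exact W.sum_mem fun p _ => W.mul_mem (hg.1 _) (hh.1 _)
  · simp [hj0]

theorem coeff_mul_mem {W : Subring Ω} {f g : Polynomial Ω} (hf : ∀ i, f.coeff i ∈ W)
    (hg : ∀ i, g.coeff i ∈ W) (i : ℕ) : (f * g).coeff i ∈ W := by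
  rw [coeff_mul]
  exact W.sum_mem fun p _ => W.mul_mem (hf _) (hg _)

theorem Trans.eval_ne {L : Subfield Ω} {T : Ω} (hT : Trans L T) {f : Polynomial Ω}
    (hf : ∀ i, f.coeff i ∈ L) (h0 : f ≠ 0) : f.eval T ≠ 0 := fun h => h0 (hT f hf h)

/-- The Nagata ring as a subring. -/
def nagR {W : Subring Ω} {L : Subfield Ω} (hW : IsValIn W L) {T : Ω} (hT : Trans L T) :
    Subring Ω where
  carrier := nag (W : Set Ω) T
  mul_mem' := by
    intro a b ha hb
    obtain ⟨f, g, hf, hg, rfl⟩ := hW.exists_prim ha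
    obtain ⟨f', g', hf', hg', rfl⟩ := hW.exists_prim hb
    refine hW.mem_nag_of_mul (coeff_mul_mem hf hf') hg hg' ?_
    rw [eval_mul, eval_mul, div_mul_div_comm]
  one_mem' := mem_nag_of_prim 1 1 (fun i => by rw [coeff_one]; split_ifs <;> simp [W.one_mem, W.zero_mem])
    ⟨fun i => by rw [coeff_one]; split_ifs <;> simp [W.one_mem, W.zero_mem], 0, by simp⟩ (by simp)
  add_mem' := by
    intro a b ha hb
    obtain ⟨f, g, hf, hg, rfl⟩ := hW.exists_prim ha
    obtain ⟨f', g', hf', hg', rfl⟩ := hW.exists_prim hb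
    have e1 : g.eval T ≠ 0 := hT.eval_ne (fun i => hW.1 _ (hg.1 i)) hg.ne_zero
    have e2 : g'.eval T ≠ 0 := hT.eval_ne (fun i => hW.1 _ (hg'.1 i)) hg'.ne_zero
    refine hW.mem_nag_of_mul (f := f * g' + g * f') (fun i => ?_) hg hg' ?_
    · rw [coeff_add]; exact W.add_mem (coeff_mul_mem hf hg'.1 i) (coeff_mul_mem hg.1 hf' i)
    · rw [eval_mul, eval_add, eval_mul, eval_mul, div_add_div _ _ e1 e2]
  zero_mem' := mem_nag_of_prim 0 1 (fun i => by simp [W.zero_mem])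
    ⟨fun i => by rw [coeff_one]; split_ifs <;> simp [W.one_mem, W.zero_mem], 0, by simp⟩ (by simp)
  neg_mem' := by
    intro a ha
    obtain ⟨f, g, hf, hg, rfl⟩ := hW.exists_prim ha
    exact mem_nag_of_prim (-f) g (fun i => by rw [coeff_neg]; exact W.neg_mem (hf i)) hg
      (by rw [eval_neg, neg_div])

theorem mem_nagR {W : Subring Ω} {L : Subfield Ω} (hW : IsValIn W L) {T : Ω} (hT : Trans L T)
    {x : Ω} : x ∈ nagR hW hT ↔ x ∈ nag (W : Set Ω) T := Iff.rfl

/-- `L' = L(T)` -/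
def GenBy (L L' : Subfield Ω) (T : Ω) : Prop :=
  L ≤ L' ∧ T ∈ L' ∧ ∀ x ∈ L', ∃ f g : Polynomial Ω, (∀ i, f.coeff i ∈ L) ∧ (∀ i, g.coeff i ∈ L) ∧
    g.eval T ≠ 0 ∧ x = f.eval T / g.eval T

theorem eval_mem {L : Subfield Ω} {T : Ω} (hT : T ∈ L) {f : Polynomial Ω}
    (hf : ∀ i, f.coeff i ∈ L) : f.eval T ∈ L := by
  rw [eval_eq_sum]
  exact L.sum_mem fun i _ => L.mul_mem (hf i) (L.pow_mem hT i)

theorem eval_mem' {L : Subring Ω} {T : Ω} (hT : T ∈ L) {f : Polynomial Ω}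
    (hf : ∀ i, f.coeff i ∈ L) : f.eval T ∈ L := by
  rw [eval_eq_sum]
  exact L.sum_mem fun i _ => L.mul_mem (hf i) (L.pow_mem hT i)

theorem nagR_isValIn {W : Subring Ω} {L L' : Subfield Ω} (hW : IsValIn W L) {T : Ω}
    (hT : Trans L T) (hG : GenBy L L' T) : IsValIn (nagR hW hT) L' := by
  refine ⟨fun x hx => ?_, fun x hx => ?_⟩
  · obtain ⟨f, g, hf, hg, rfl⟩ := hW.exists_prim hx
    exact L'.div_mem (eval_mem hG.2.1 fun i => hG.1 (hW.1 _ (hf i)))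
      (eval_mem hG.2.1 fun i => hG.1 (hW.1 _ (hg.1 i)))
  · obtain ⟨f, g, hf, hg, hg0, rfl⟩ := hG.2.2 x hx
    by_cases hf0 : f = 0
    · left; subst hf0; simp
    have hgn : g ≠ 0 := by rintro rfl; simp at hg0
    obtain ⟨a, haL, ha0, -, hpa⟩ := hW.normalize f hf hf0
    obtain ⟨b, hbL, hb0, -, hpb⟩ := hW.normalize g hg hgn
    have hfT := hT.eval_ne hf hf0
    rcases hW.2 (a / b) (L.div_mem haL hbL) with h | h
    · left
      refine mem_nag_of_prim (C (a/b) * (C a⁻¹ * f)) _ (fun i => ?_) hpb ?_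
      · rw [coeff_C_mul]; exact W.mul_mem h (hpa.1 i)
      · simp only [eval_mul, eval_C]; field_simp
    · right
      refine mem_nag_of_prim (C (a/b)⁻¹ * (C b⁻¹ * g)) _ (fun i => ?_) hpa ?_
      · rw [coeff_C_mul]; exact W.mul_mem h (hpb.1 i)
      · simp only [eval_mul, eval_C]; field_simp

theorem coeff_C_mem {W : Subring Ω} {x : Ω} (hx : x ∈ W) (i : ℕ) : (C x).coeff i ∈ W := by
  rw [coeff_C]; split_ifs <;> simp [hx, W.zero_mem]

theorem prim_one (W : Subring Ω) : Prim W (1 : Polynomial Ω) :=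
  ⟨fun i => coeff_C_mem W.one_mem i, 0, by simp⟩

theorem mem_nag_of_mem {W : Subring Ω} {T x : Ω} (hx : x ∈ W) : x ∈ nag (W : Set Ω) T :=
  mem_nag_of_prim (C x) 1 (coeff_C_mem hx) (prim_one W) (by simp)

theorem mem_of_mem_nag {W : Subring Ω} {L : Subfield Ω} (hW : IsValIn W L) {T : Ω}
    (hT : Trans L T) {x : Ω} (hxL : x ∈ L) (hx : x ∈ nag (W : Set Ω) T) : x ∈ W := by
  obtain ⟨f, g, hf, hg, e⟩ := hW.exists_prim hx
  have hg0 : g.eval T ≠ 0 := hT.eval_ne (fun i => hW.1 _ (hg.1 i)) hg.ne_zero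
  have h1 : C x * g - f = 0 := by
    refine hT _ (fun i => ?_) ?_
    · rw [coeff_sub, coeff_C_mul]
      exact L.sub_mem (L.mul_mem hxL (hW.1 _ (hg.1 i))) (hW.1 _ (hf i))
    · rw [eval_sub, eval_mul, eval_C, e]; field_simp; simp
  obtain ⟨hg1, j, hj⟩ := hg
  have h2 := congrArg (fun p => p.coeff j) h1
  simp only [coeff_sub, coeff_C_mul, hj, mul_one, coeff_zero] at h2
  rw [sub_eq_zero.mp h2]; exact hf j

/-- Valuation overrings. -/
def vals (D : Set Ω) (L : Subfield Ω) : Set (Subring Ω) := {W | D ⊆ ↑W ∧ IsValIn W L}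

/-- Kronecker function ring. -/
def kr (D : Set Ω) (L : Subfield Ω) (T : Ω) : Set Ω := {x | ∀ W ∈ vals D L, x ∈ nag (W : Set Ω) T}

/-- the basic criterion for membership in the Kronecker function ring -/
theorem mem_kr_of_coeff {D : Set Ω} {L : Subfield Ω} {T : Ω} (f g : Polynomial Ω)
    (hg : ∀ i, g.coeff i ∈ L) (hg0 : g ≠ 0) (hfg : ∀ i, ∃ j, f.coeff i = g.coeff j) {x : Ω}
    (hx : x = f.eval T / g.eval T) : x ∈ kr D L T := by
  intro W hW
  obtain ⟨c, hcL, hc0, -, hp⟩ := hW.2.normalize g hg hg0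
  refine mem_nag_of_prim (C c⁻¹ * f) (C c⁻¹ * g) (fun i => ?_) hp ?_
  · obtain ⟨j, hj⟩ := hfg i
    rw [coeff_C_mul, hj, ← coeff_C_mul]; exact hp.1 j
  · rw [eval_mul, eval_mul, eval_C, mul_div_mul_left _ _ (inv_ne_zero hc0), hx]

/-- The Kronecker function ring as a subring. -/
def krR (D : Set Ω) (L : Subfield Ω) {T : Ω} (hT : Trans L T) : Subring Ω where
  carrier := kr D L T
  mul_mem' := fun ha hb W hW => (nagR hW.2 hT).mul_mem (ha W hW) (hb W hW)
  one_mem' := fun W hW => (nagR hW.2 hT).one_mem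
  add_mem' := fun ha hb W hW => (nagR hW.2 hT).add_mem (ha W hW) (hb W hW)
  zero_mem' := fun W hW => (nagR hW.2 hT).zero_mem
  neg_mem' := fun ha W hW => (nagR hW.2 hT).neg_mem (ha W hW)

theorem T_mem_kr {D : Set Ω} {L : Subfield Ω} {T : Ω} : T ∈ kr D L T := fun W _ =>
  mem_nag_of_prim X 1 (fun i => by rw [coeff_X]; split_ifs <;> simp [W.one_mem, W.zero_mem])
    (prim_one W) (by simp)

theorem T_inv_mem_kr {D : Set Ω} {L : Subfield Ω} {T : Ω} : T⁻¹ ∈ kr D L T := fun W _ =>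
  mem_nag_of_prim 1 X (prim_one W).1
    ⟨fun i => by rw [coeff_X]; split_ifs <;> simp [W.one_mem, W.zero_mem], 1, by simp⟩ (by simp)

/-- The key lemma. -/
theorem key_kr {D : Set Ω} {L L' : Subfield Ω} {T : Ω} (hT : Trans L T) (hG : GenBy L L' T)
    {x : Ω} (hx : x ∈ L') : ∃ N0 : ℕ, ∀ N ≥ N0, 1 + T⁻¹ ^ N * x ≠ 0 ∧
      1 / (1 + T⁻¹ ^ N * x) ∈ kr D L T ∧ x / (1 + T⁻¹ ^ N * x) ∈ kr D L T := by
  obtain ⟨f, g, hf, hg, hg0, rfl⟩ := hG.2.2 x hx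
  have hgn : g ≠ 0 := by rintro rfl; simp at hg0
  have hT0 : T ≠ 0 := by
    have := hT.eval_ne (f := X) (fun i => by
      rw [coeff_X]; split_ifs <;> simp [L.one_mem, L.zero_mem]) X_ne_zero
    simpa using this
  refine ⟨f.natDegree + 1, fun N hN => ?_⟩
  set h := g * X ^ N + f with hh
  have hcoef : ∀ i, h.coeff i = if i < N then f.coeff i else g.coeff (i - N) := by
    intro i
    rw [hh, coeff_add, coeff_mul_X_pow']
    split_ifs with h1 h2 h2
    · omega
    · rw [coeff_eq_zero_of_natDegree_lt (p := f) (by omega), add_zero]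
    · rw [zero_add]
    · omega
  have hL : ∀ i, h.coeff i ∈ L := fun i => by
    rw [hcoef]; split_ifs
    · exact hf _
    · exact hg _
  have hfj : ∀ i, ∃ j, f.coeff i = h.coeff j := fun i => by
    by_cases hi : i < N
    · exact ⟨i, by rw [hcoef, if_pos hi]⟩
    · refine ⟨h.natDegree + 1, ?_⟩
      rw [coeff_eq_zero_of_natDegree_lt (p := h) (by omega),
        coeff_eq_zero_of_natDegree_lt (p := f) (by omega)]
  have hgj : ∀ i, ∃ j, g.coeff i = h.coeff j := fun i => ⟨i + N, by rw [hcoef]; simp⟩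
  have hXN : ∀ (p : Polynomial Ω), (∀ i, ∃ j, p.coeff i = h.coeff j) →
      ∀ i, ∃ j, (p * X ^ N).coeff i = h.coeff j := fun p hp i => by
    rw [coeff_mul_X_pow']
    split_ifs
    · exact hp _
    · exact ⟨h.natDegree + 1, (coeff_eq_zero_of_natDegree_lt (p := h) (by omega)).symm⟩
  have hn0 : h ≠ 0 := by
    intro h0
    apply hgn
    ext i
    obtain ⟨j, hj⟩ := hgj i
    rw [hj, h0]; simp
  have hhT : g.eval T * T ^ N + f.eval T ≠ 0 := by
    have := hT.eval_ne hL hn0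
    simpa [hh] using this
  have e : 1 + T⁻¹ ^ N * (f.eval T / g.eval T) =
      (g.eval T * T ^ N + f.eval T) / (g.eval T * T ^ N) := by
    rw [inv_pow]
    field_simp
  rw [e]
  refine ⟨div_ne_zero hhT (mul_ne_zero hg0 (pow_ne_zero _ hT0)), ?_, ?_⟩
  · refine mem_kr_of_coeff (g * X ^ N) h hL hn0 (hXN g hgj) ?_
    simp [hh]
  · refine mem_kr_of_coeff (f * X ^ N) h hL hn0 (hXN f hfj) ?_
    simp only [hh, eval_mul, eval_add, eval_pow, eval_X]
    field_simp

/-- coefficients divided by the polynomial lie in the Kronecker function ring -/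
theorem coeff_div_kr {D : Set Ω} {L : Subfield Ω} {T : Ω} (g : Polynomial Ω)
    (hg : ∀ i, g.coeff i ∈ L) (hg0 : g ≠ 0) (j : ℕ) : g.coeff j / g.eval T ∈ kr D L T := by
  refine mem_kr_of_coeff (C (g.coeff j)) g hg hg0 (fun i => ?_) (by simp)
  rw [coeff_C]
  split_ifs
  · exact ⟨j, rfl⟩
  · exact ⟨g.natDegree + 1, (coeff_eq_zero_of_natDegree_lt (by omega)).symm⟩

/-- Gauss extensions: every element of `L(T)` is associated to an element of `L`. -/
theorem gauss_assoc {D : Set Ω} {L L' : Subfield Ω} {T : Ω} (hT : Trans L T) (hG : GenBy L L' T)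
    {W : Subring Ω} (hW : IsValIn W L') (hB : kr D L T ⊆ W) {x : Ω} (hx : x ∈ L') (hx0 : x ≠ 0) :
    ∃ y ∈ L, y ≠ 0 ∧ x / y ∈ W ∧ y / x ∈ W := by
  have key : ∀ f : Polynomial Ω, (∀ i, f.coeff i ∈ L) → f ≠ 0 →
      ∃ y ∈ L, y ≠ 0 ∧ f.eval T / y ∈ W ∧ y / f.eval T ∈ W := by
    intro f hf hf0
    obtain ⟨c, hcL, hc0, ⟨j, rfl⟩, hp⟩ := hW.normalize f (fun i => hG.1 (hf i)) hf0
    refine ⟨_, hf j, hc0, ?_, hB (coeff_div_kr f hf hf0 j)⟩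
    have := eval_mem' (hB T_mem_kr) hp.1
    rw [eval_mul, eval_C] at this
    rwa [div_eq_inv_mul]
  obtain ⟨f, g, hf, hg, hg0, rfl⟩ := hG.2.2 x hx
  have hgn : g ≠ 0 := by rintro rfl; simp at hg0
  have hf0 : f ≠ 0 := by rintro rfl; simp at hx0
  obtain ⟨a, haL, ha0, ha1, ha2⟩ := key f hf hf0
  obtain ⟨b, hbL, hb0, hb1, hb2⟩ := key g hg hgn
  have hfT := hT.eval_ne hf hf0
  refine ⟨a / b, L.div_mem haL hbL, div_ne_zero ha0 hb0, ?_, ?_⟩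
  · have := W.mul_mem ha1 hb2
    convert! this using 1; field_simp
  · have := W.mul_mem ha2 hb1
    convert! this using 1; field_simp

end generic
end TowerAux


namespace TowerAux
open Polynomial WithZero

variable {Ω : Type*} [Field Ω]

def Chain (W : Subring Ω) {s : ℕ} (y : Fin s → Ω) : Prop :=
  (∀ i, y i ∈ W ∧ y i ≠ 0 ∧ (y i)⁻¹ ∉ W) ∧ ∀ i j, i < j → ∀ m : ℕ, (y j) ^ m / y i ∉ W

def aSet (k K : Subfield Ω) (v : Valuation Ω ℤᵐ⁰) : Set Ω :=
  {x | x ∈ K ∧ ∃ c ∈ k, v (x - c) < 1}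

structure Tower (Ω : Type*) [Field Ω] (r : ℕ) where
  K : ℕ → Subfield Ω
  k : ℕ → Subfield Ω
  T : ℕ → Ω
  v : Valuation Ω ℤᵐ⁰
  kK : ∀ n, k n ≤ K n
  kmono : ∀ n, k n ≤ k (n + 1)
  trans : ∀ n, Trans (K n) (T n)
  gen : ∀ n, GenBy (K n) (K (n + 1)) (T n)
  vT : ∀ n, v (T n) = exp (1 : ℤ)
  vk : ∀ n, ∀ c ∈ k n, c ≠ 0 → v c = 1
  clos : ∀ n, ∀ x ∈ K n, (∀ W ∈ vals (aSet (k n) (K n) v) (K n), x ∈ W) → x ∈ aSet (k n) (K n) v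
  bound : ∀ n s, ∀ W : Subring Ω, IsValIn W (K n) → (∀ c ∈ k n, c ∈ W) →
    ∀ y : Fin s → Ω, Chain W y → s ≤ r
  W1 : ∃ W ∈ vals (aSet (k 0) (K 0) v) (K 0), ∃ y : Fin r → Ω, Chain W y

namespace Tower
variable {r : ℕ} (τ : Tower Ω r)

abbrev A (n : ℕ) : Set Ω := aSet (τ.k n) (τ.K n) τ.v

def D : ℕ → Set Ω
  | 0 => τ.A 0
  | n + 1 => kr (D n) (τ.K n) (τ.T n) ∩ τ.A (n + 1)

theorem D_zero : τ.D 0 = τ.A 0 := rfl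
theorem D_succ (n : ℕ) : τ.D (n + 1) = kr (τ.D n) (τ.K n) (τ.T n) ∩ τ.A (n + 1) := rfl

theorem D_sub_A (n : ℕ) : τ.D n ⊆ τ.A n := by
  cases n with
  | zero => exact fun _ h => h
  | succ n => exact fun _ h => h.2

theorem D_sub_K {n : ℕ} {x : Ω} (h : x ∈ τ.D n) : x ∈ τ.K n := (τ.D_sub_A n h).1

theorem vc {n : ℕ} {c : Ω} (h : c ∈ τ.k n) : τ.v c ≤ 1 := by
  by_cases h0 : c = 0
  · simp [h0]
  · exact (τ.vk n c h h0).le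

theorem vA {n : ℕ} {x : Ω} (h : x ∈ τ.A n) : τ.v x ≤ 1 := by
  obtain ⟨_, c, hc, h⟩ := h
  have := τ.v.map_add (x - c) c
  rw [sub_add_cancel] at this
  exact this.trans (max_le h.le (τ.vc hc))

theorem A_of_lt {n : ℕ} {x : Ω} (hK : x ∈ τ.K n) (h : τ.v x < 1) : x ∈ τ.A n :=
  ⟨hK, 0, (τ.k n).zero_mem, by simpa using h⟩

theorem A_of_k {n : ℕ} {x : Ω} (hK : x ∈ τ.k n) : x ∈ τ.A n :=
  ⟨τ.kK n hK, x, hK, by simp⟩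

theorem A_add {n : ℕ} {x y : Ω} (hx : x ∈ τ.A n) (hy : y ∈ τ.A n) : x + y ∈ τ.A n := by
  obtain ⟨h1, c, hc, h⟩ := hx
  obtain ⟨h1', c', hc', h'⟩ := hy
  refine ⟨(τ.K n).add_mem h1 h1', c + c', (τ.k n).add_mem hc hc', ?_⟩
  rw [add_sub_add_comm]
  exact lt_of_le_of_lt (τ.v.map_add _ _) (max_lt h h')

theorem A_mul {n : ℕ} {x y : Ω} (hx : x ∈ τ.A n) (hy : y ∈ τ.A n) : x * y ∈ τ.A n := by
  have hvx := τ.vA hx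
  obtain ⟨h1, c, hc, h⟩ := hx
  obtain ⟨h1', c', hc', h'⟩ := hy
  refine ⟨(τ.K n).mul_mem h1 h1', c * c', (τ.k n).mul_mem hc hc', ?_⟩
  have : x * y - c * c' = x * (y - c') + (x - c) * c' := by ring
  rw [this]
  refine lt_of_le_of_lt (τ.v.map_add _ _) (max_lt ?_ ?_) <;> rw [map_mul]
  · exact (mul_le_of_le_one_left' hvx).trans_lt h'
  · exact (mul_le_of_le_one_right' (τ.vc hc')).trans_lt h

theorem A_inv {n : ℕ} {x : Ω} (hx : x ∈ τ.A n) (h : τ.v x = 1) : x⁻¹ ∈ τ.A n := by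
  obtain ⟨h1, c, hc, h2⟩ := hx
  have hx0 : x ≠ 0 := by rintro rfl; simp at h
  have hc0 : c ≠ 0 := by rintro rfl; simp [h] at h2
  refine ⟨(τ.K n).inv_mem h1, c⁻¹, (τ.k n).inv_mem hc, ?_⟩
  have : x⁻¹ - c⁻¹ = -(x - c) * x⁻¹ * c⁻¹ := by field_simp; ring
  rw [this, map_mul, map_mul, Valuation.map_neg, map_inv₀, map_inv₀, h, τ.vk n c hc hc0]
  simpa using h2

theorem Kmono1 (n : ℕ) : τ.K n ≤ τ.K (n + 1) := (τ.gen n).1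

theorem Kmono : Monotone τ.K := monotone_nat_of_le_succ τ.Kmono1

theorem Amono {n : ℕ} {x : Ω} (h : x ∈ τ.A n) : x ∈ τ.A (n + 1) := by
  obtain ⟨h1, c, hc, h2⟩ := h
  exact ⟨τ.Kmono1 n h1, c, τ.kmono n hc, h2⟩

theorem T_ne (n : ℕ) : τ.T n ≠ 0 := by
  intro h
  have := τ.vT n
  rw [h, map_zero] at this
  exact exp_ne_zero this.symm

/-- Lemma E -/
theorem E {n : ℕ} {x : Ω} (hx : x ∈ τ.K n) (h : ∀ W ∈ vals (τ.D n) (τ.K n), x ∈ W) :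
    x ∈ τ.D n := by
  cases n with
  | zero => exact τ.clos 0 x hx h
  | succ n =>
    refine ⟨fun W hW => ?_, τ.clos (n + 1) x hx fun W hW => h W ⟨?_, hW.2⟩⟩
    · exact h (nagR hW.2 (τ.trans n)) ⟨fun z hz => hz.1 W hW, nagR_isValIn hW.2 _ (τ.gen n)⟩
    · exact fun z hz => hW.1 hz.2

theorem D_sub_W {n : ℕ} {x : Ω} (h : x ∈ τ.D n) (W) (hW : W ∈ vals (τ.D n) (τ.K n)) : x ∈ W :=
  hW.1 h

def DR (n : ℕ) : Subring Ω where
  carrier := τ.D n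
  mul_mem' := fun ha hb => τ.E ((τ.K n).mul_mem (τ.D_sub_K ha) (τ.D_sub_K hb)) fun W hW =>
    W.mul_mem (hW.1 ha) (hW.1 hb)
  add_mem' := fun ha hb => τ.E ((τ.K n).add_mem (τ.D_sub_K ha) (τ.D_sub_K hb)) fun W hW =>
    W.add_mem (hW.1 ha) (hW.1 hb)
  one_mem' := τ.E ((τ.K n).one_mem) fun W _ => W.one_mem
  zero_mem' := τ.E ((τ.K n).zero_mem) fun W _ => W.zero_mem
  neg_mem' := fun ha => τ.E ((τ.K n).neg_mem (τ.D_sub_K ha)) fun W hW => W.neg_mem (hW.1 ha)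

/-- Kronecker ring as a subring -/
def B (n : ℕ) : Subring Ω := krR (τ.D n) (τ.K n) (τ.trans n)

theorem mem_B {n : ℕ} {x : Ω} : x ∈ τ.B n ↔ x ∈ kr (τ.D n) (τ.K n) (τ.T n) := Iff.rfl

theorem mem_D_succ {n : ℕ} {x : Ω} : x ∈ τ.D (n + 1) ↔ x ∈ τ.B n ∧ x ∈ τ.A (n + 1) := Iff.rfl

theorem Dmono1 (n : ℕ) : τ.D n ⊆ τ.D (n + 1) := fun _ hx =>
  ⟨fun _ hW => mem_nag_of_mem (hW.1 hx), τ.Amono (τ.D_sub_A n hx)⟩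

theorem Dmono : Monotone τ.D := monotone_nat_of_le_succ τ.Dmono1

theorem B_inter {n : ℕ} {x : Ω} (hx : x ∈ τ.K n) (h : x ∈ τ.B n) : x ∈ τ.D n :=
  τ.E hx fun W hW => mem_of_mem_nag hW.2 (τ.trans n) hx (h W hW)

theorem D_inter {n m : ℕ} (hnm : n ≤ m) {x : Ω} (hx : x ∈ τ.K n) (h : x ∈ τ.D m) : x ∈ τ.D n := by
  induction hnm with
  | refl => exact h
  | step hnm ih => exact ih (τ.B_inter (τ.Kmono hnm hx) h.1)

def KU : Subfield Ω := ⨆ n, τ.K n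

theorem mem_KU {x : Ω} : x ∈ τ.KU ↔ ∃ n, x ∈ τ.K n :=
  Subfield.mem_iSup_of_directed τ.Kmono.directed_le

def DU : Subring Ω := ⨆ n, τ.DR n

theorem mem_DU {x : Ω} : x ∈ τ.DU ↔ ∃ n, x ∈ τ.D n :=
  Subring.mem_iSup_of_directed (S := τ.DR) (Monotone.directed_le τ.Dmono)

theorem DU_inter {n : ℕ} {x : Ω} (hx : x ∈ τ.K n) (h : x ∈ τ.DU) : x ∈ τ.D n := by
  obtain ⟨m, hm⟩ := τ.mem_DU.mp h
  rcases le_total n m with hnm | hnm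
  · exact τ.D_inter hnm hx hm
  · exact τ.Dmono hnm hm

def t (n : ℕ) : Ω := (τ.T n)⁻¹

theorem vt (n : ℕ) : τ.v (τ.t n) = exp (-1 : ℤ) := by
  rw [t, map_inv₀, τ.vT, exp_neg]

theorem vt_lt (n : ℕ) : τ.v (τ.t n) < 1 := by
  rw [vt, ← exp_zero, exp_lt_exp]; norm_num

theorem t_ne (n : ℕ) : τ.t n ≠ 0 := inv_ne_zero (τ.T_ne n)

theorem t_K (n : ℕ) : τ.t n ∈ τ.K (n + 1) := (τ.K (n + 1)).inv_mem (τ.gen n).2.1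

theorem t_B (n : ℕ) : τ.t n ∈ τ.B n := T_inv_mem_kr

theorem T_B (n : ℕ) : τ.T n ∈ τ.B n := T_mem_kr

theorem t_D (n : ℕ) : τ.t n ∈ τ.D (n + 1) := ⟨τ.t_B n, τ.A_of_lt (τ.t_K n) (τ.vt_lt n)⟩

theorem lt_one_iff {x : Ω} : τ.v x < 1 ↔ τ.v x ≤ exp (-1 : ℤ) := by
  constructor
  · intro h
    by_cases hx : τ.v x = 0
    · rw [hx]; exact zero_le
    · rw [← exp_log hx, ← exp_zero, exp_lt_exp] at h
      rw [← exp_log hx, exp_le_exp]; omega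
  · intro h
    exact lt_of_le_of_lt h (by rw [← exp_zero, exp_lt_exp]; norm_num)

theorem pow_lt (n : ℕ) (x : Ω) : ∃ N0 : ℕ, ∀ N ≥ N0, τ.v (τ.t n ^ N * x) < 1 := by
  by_cases hx : τ.v x = 0
  · exact ⟨0, fun N _ => by simp [map_mul, hx]⟩
  · refine ⟨(log (τ.v x)).toNat + 1, fun N hN => ?_⟩
    rw [map_mul, map_pow, vt, ← exp_log hx, ← exp_nsmul, ← exp_add, ← exp_zero, exp_lt_exp]
    simp only [smul_neg, nsmul_eq_mul, mul_one]
    omega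

theorem B_to_D (n : ℕ) {b : Ω} (hb : b ∈ τ.B n) (hK : b ∈ τ.K (n + 1)) :
    ∃ N0 : ℕ, ∀ N ≥ N0, τ.t n ^ N * b ∈ τ.D (n + 1) := by
  obtain ⟨N0, h⟩ := τ.pow_lt n b
  exact ⟨N0, fun N hN => ⟨(τ.B n).mul_mem ((τ.B n).pow_mem (τ.t_B n) N) hb,
    τ.A_of_lt ((τ.K _).mul_mem ((τ.K _).pow_mem (τ.t_K n) N) hK) (h N hN)⟩⟩

theorem sq_div_t {n : ℕ} {x : Ω} (hx : x ∈ τ.D (n + 1)) (h : τ.v x < 1) :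
    x ^ 2 / τ.t n ∈ τ.D (n + 1) := by
  have hK : x ^ 2 / τ.t n ∈ τ.K (n + 1) :=
    (τ.K _).div_mem ((τ.K _).pow_mem (τ.D_sub_K hx) 2) (τ.t_K n)
  refine ⟨?_, τ.A_of_lt hK ?_⟩
  · rw [t, div_inv_eq_mul]
    exact (τ.B n).mul_mem ((τ.B n).pow_mem hx.1 2) (τ.T_B n)
  · rw [map_div₀, vt, map_pow]
    have h1 := (τ.lt_one_iff).mp h
    by_cases h0 : τ.v x = 0
    · simp [h0]
    rw [← exp_log h0, exp_le_exp] at h1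
    rw [← exp_log h0, ← exp_nsmul, ← exp_sub, ← exp_zero, exp_lt_exp]
    simp only [nsmul_eq_mul]
    push_cast
    omega

/-- key elements -/
theorem key {n : ℕ} {x : Ω} (hx : x ∈ τ.K (n + 1)) : ∃ N0 : ℕ, ∀ N ≥ N0,
    1 + τ.t n ^ N * x ≠ 0 ∧ 1 / (1 + τ.t n ^ N * x) ∈ τ.B n ∧
      x / (1 + τ.t n ^ N * x) ∈ τ.B n := key_kr (τ.trans n) (τ.gen n) hx

theorem key_K {n N : ℕ} {x : Ω} (hx : x ∈ τ.K (n + 1)) : 1 / (1 + τ.t n ^ N * x) ∈ τ.K (n + 1) :=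
  (τ.K _).div_mem (τ.K _).one_mem ((τ.K _).add_mem (τ.K _).one_mem
    ((τ.K _).mul_mem ((τ.K _).pow_mem (τ.t_K n) N) hx))

theorem key_K' {n N : ℕ} {x : Ω} (hx : x ∈ τ.K (n + 1)) : x / (1 + τ.t n ^ N * x) ∈ τ.K (n + 1) := by
  rw [div_eq_mul_one_div]; exact (τ.K _).mul_mem hx (τ.key_K hx)

theorem v_one_add {x : Ω} (h : τ.v x < 1) : τ.v (1 + x) = 1 := by
  rw [Valuation.map_one_add_of_lt _ h]

/-- for x with v x ≤ 1 -/
theorem key_A {n : ℕ} {x : Ω} (hx : x ∈ τ.A (n + 1)) : ∃ N0 : ℕ, ∀ N ≥ N0,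
    1 + τ.t n ^ N * x ≠ 0 ∧ 1 / (1 + τ.t n ^ N * x) ∈ τ.D (n + 1) ∧
      x / (1 + τ.t n ^ N * x) ∈ τ.D (n + 1) ∧ τ.v (1 + τ.t n ^ N * x) = 1 := by
  obtain ⟨N0, h⟩ := τ.key hx.1
  obtain ⟨N1, h1⟩ := τ.pow_lt n x
  refine ⟨max N0 N1, fun N hN => ?_⟩
  obtain ⟨a, b, c⟩ := h N (le_trans (le_max_left _ _) hN)
  have h2 := h1 N (le_trans (le_max_right _ _) hN)
  have hv : τ.v (1 + τ.t n ^ N * x) = 1 := τ.v_one_add h2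
  have hA : 1 / (1 + τ.t n ^ N * x) ∈ τ.A (n + 1) := by
    rw [one_div]
    refine τ.A_inv (τ.A_add (τ.A_of_k (τ.k _).one_mem) (τ.A_of_lt ?_ h2)) hv
    exact (τ.K _).mul_mem ((τ.K _).pow_mem (τ.t_K n) N) hx.1
  refine ⟨a, ⟨b, hA⟩, ⟨c, ?_⟩, hv⟩
  rw [div_eq_mul_one_div]
  exact τ.A_mul hx hA

def MM : Set Ω := {x | x ∈ τ.DU ∧ τ.v x < 1}

end Tower
end TowerAux


namespace TowerAux
open Polynomial WithZero

variable {Ω : Type*} [Field Ω]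

structure PrimeSet (R : Subring Ω) (Q : Set Ω) : Prop where
  sub : ∀ x ∈ Q, x ∈ R
  zero : (0 : Ω) ∈ Q
  add : ∀ x ∈ Q, ∀ y ∈ Q, x + y ∈ Q
  mul : ∀ a ∈ R, ∀ x ∈ Q, a * x ∈ Q
  one : (1 : Ω) ∉ Q
  prime : ∀ a ∈ R, ∀ b ∈ R, a * b ∈ Q → a ∈ Q ∨ b ∈ Q

theorem PrimeSet.pow {R : Subring Ω} {Q : Set Ω} (h : PrimeSet R Q) {a : Ω} (ha : a ∈ R) {n : ℕ}
    (hn : a ^ n ∈ Q) : a ∈ Q := by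
  induction n with
  | zero => rw [pow_zero] at hn; exact absurd hn h.one
  | succ n ih =>
    rw [pow_succ] at hn
    exact (h.prime _ (R.pow_mem ha n) _ ha hn).elim ih id

theorem mem_img {R : Subring Ω} (P : Ideal R) {x : Ω} (hx : x ∈ R) :
    x ∈ Subtype.val '' (P : Set R) ↔ (⟨x, hx⟩ : R) ∈ P := by
  constructor
  · rintro ⟨y, hy, rfl⟩; exact hy
  · intro h; exact ⟨_, h, rfl⟩

theorem primeSet_of_ideal {R : Subring Ω} (P : Ideal R) (hP : P.IsPrime) :
    PrimeSet R (Subtype.val '' (P : Set R)) where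
  sub := by rintro _ ⟨y, _, rfl⟩; exact y.2
  zero := ⟨0, P.zero_mem, rfl⟩
  add := by rintro _ ⟨x, hx, rfl⟩ _ ⟨y, hy, rfl⟩; exact ⟨x + y, P.add_mem hx hy, rfl⟩
  mul := by rintro a ha _ ⟨y, hy, rfl⟩; exact ⟨⟨a, ha⟩ * y, P.mul_mem_left _ hy, rfl⟩
  one := by rw [mem_img P R.one_mem]; exact fun h => hP.ne_top ((Ideal.eq_top_iff_one P).mpr h)
  prime := by
    intro a ha b hb h
    rw [mem_img P (R.mul_mem ha hb)] at h
    rw [mem_img P ha, mem_img P hb]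
    exact hP.mem_or_mem (x := ⟨a, ha⟩) (y := ⟨b, hb⟩) h

def loc (R Q : Set Ω) : Set Ω := {x | ∃ a ∈ R, ∃ b ∈ R, b ∉ Q ∧ x = a / b}

/-- localization as a subring -/
def locR {R : Subring Ω} {Q : Set Ω} (h : PrimeSet R Q) : Subring Ω where
  carrier := loc R Q
  mul_mem' := by
    rintro _ _ ⟨a, ha, b, hb, hbQ, rfl⟩ ⟨a', ha', b', hb', hbQ', rfl⟩
    refine ⟨a * a', R.mul_mem ha ha', b * b', R.mul_mem hb hb', fun hh => ?_, ?_⟩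
    · exact (h.prime _ hb _ hb' hh).elim hbQ hbQ'
    · rw [div_mul_div_comm]
  one_mem' := ⟨1, R.one_mem, 1, R.one_mem, h.one, by simp⟩
  add_mem' := by
    rintro _ _ ⟨a, ha, b, hb, hbQ, rfl⟩ ⟨a', ha', b', hb', hbQ', rfl⟩
    refine ⟨a * b' + b * a', R.add_mem (R.mul_mem ha hb') (R.mul_mem hb ha'), b * b',
      R.mul_mem hb hb', fun hh => ?_, ?_⟩
    · exact (h.prime _ hb _ hb' hh).elim hbQ hbQ'
    · have h1 : b ≠ 0 := by rintro rfl; exact hbQ h.zero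
      have h2 : b' ≠ 0 := by rintro rfl; exact hbQ' h.zero
      rw [div_add_div _ _ h1 h2]
  zero_mem' := ⟨0, R.zero_mem, 1, R.one_mem, h.one, by simp⟩
  neg_mem' := by
    rintro _ ⟨a, ha, b, hb, hbQ, rfl⟩
    exact ⟨-a, R.neg_mem ha, b, hb, hbQ, by rw [neg_div]⟩

theorem mem_locR {R : Subring Ω} {Q : Set Ω} (h : PrimeSet R Q) {x : Ω} :
    x ∈ locR h ↔ x ∈ loc R Q := Iff.rfl

theorem IsValIn.restr {W : Subring Ω} {L L' : Subfield Ω} (hW : IsValIn W L') (h : L ≤ L') :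
    IsValIn (W ⊓ L.toSubring) L := by
  refine ⟨fun x hx => hx.2, fun x hx => ?_⟩
  rcases hW.2 x (h hx) with h | h
  · exact Or.inl ⟨h, hx⟩
  · exact Or.inr ⟨h, L.inv_mem hx⟩

theorem Chain.assoc {W : Subring Ω} {s : ℕ} {y y' : Fin s → Ω} (h : Chain W y)
    (h0 : ∀ i, y' i ≠ 0) (h1 : ∀ i, y i / y' i ∈ W) (h2 : ∀ i, y' i / y i ∈ W) : Chain W y' := by
  refine ⟨fun i => ⟨?_, h0 i, fun hh => (h.1 i).2.2 ?_⟩, fun i j hij m hh => h.2 i j hij m ?_⟩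
  · have := W.mul_mem (h2 i) (h.1 i).1
    rwa [div_mul_cancel₀ _ (h.1 i).2.1] at this
  · have := W.mul_mem (h2 i) hh
    have e : y' i / y i * (y' i)⁻¹ = (y i)⁻¹ := by
      have := h0 i; have := (h.1 i).2.1; field_simp
    rwa [e] at this
  · have := W.mul_mem (W.mul_mem (W.pow_mem (h1 j) m) hh) (h2 i)
    have e : (y j / y' j) ^ m * (y' j ^ m / y' i) * (y' i / y i) = y j ^ m / y i := by
      have := h0 i; have := pow_ne_zero m (h0 j); have := (h.1 i).2.1; rw [div_pow]; field_simp
    rwa [e] at this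

theorem Chain.restr {W : Subring Ω} {s : ℕ} {y : Fin s → Ω} (h : Chain W y) (L : Subfield Ω)
    (hL : ∀ i, y i ∈ L) : Chain (W ⊓ L.toSubring) y :=
  ⟨fun i => ⟨⟨(h.1 i).1, hL i⟩, (h.1 i).2.1, fun hh => (h.1 i).2.2 hh.1⟩,
    fun i j hij m hh => h.2 i j hij m hh.1⟩

/-- lower bound for the dimension -/
theorem le_dim_of_chain {W R : Subring Ω} {L : Subfield Ω} (hW : IsValIn W L) (hR : R ≤ W)
    {s : ℕ} {y : Fin s → Ω} (h : Chain W y) (hy : ∀ i, y i ∈ R) :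
    (s : WithBot ℕ∞) ≤ ringKrullDim R := by
  have hcmp : ∀ a b : Ω, a ∈ W → b ∈ W → (∃ c ∈ W, a = c * b) ∨ (∃ c ∈ W, b = c * a) := by
    intro a b ha hb
    by_cases ha0 : a = 0
    · exact Or.inl ⟨0, W.zero_mem, by simp [ha0]⟩
    by_cases hb0 : b = 0
    · exact Or.inr ⟨0, W.zero_mem, by simp [hb0]⟩
    rcases hW.2 (a / b) (L.div_mem (hW.1 _ ha) (hW.1 _ hb)) with h | h
    · exact Or.inl ⟨_, h, by field_simp⟩
    · exact Or.inr ⟨_, h, by field_simp⟩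
  let I : Fin s → Ideal R := fun i =>
    { carrier := {d | ∃ m : ℕ, (d : Ω) ^ m / y i ∈ W}
      add_mem' := by
        rintro ⟨a, ha⟩ ⟨b, hb⟩ ⟨m, hm⟩ ⟨n, hn⟩
        rcases hcmp a b (hR ha) (hR hb) with ⟨c, hc, e⟩ | ⟨c, hc, e⟩
        · refine ⟨n, ?_⟩
          simp only [Subring.coe_add] at hn ⊢
          have := W.mul_mem (W.pow_mem (W.add_mem W.one_mem hc) n) hn
          convert this using 1
          rw [e, ← mul_div_assoc, ← mul_pow]; ring
        · refine ⟨m, ?_⟩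
          simp only [Subring.coe_add] at hm ⊢
          have := W.mul_mem (W.pow_mem (W.add_mem W.one_mem hc) m) hm
          convert this using 1
          rw [e, ← mul_div_assoc, ← mul_pow]; ring
      zero_mem' := ⟨1, by simp⟩
      smul_mem' := by
        rintro ⟨a, ha⟩ ⟨b, hb⟩ ⟨m, hm⟩
        refine ⟨m, ?_⟩
        simp only [smul_eq_mul, Subring.coe_mul, mul_pow, mul_div_assoc]
        exact W.mul_mem (W.pow_mem (hR ha) m) hm }
  have hI : ∀ i (d : R), d ∈ I i ↔ ∃ m : ℕ, (d : Ω) ^ m / y i ∈ W := fun _ _ => Iff.rfl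
  have hIp : ∀ i, (I i).IsPrime := by
    intro i
    refine ⟨fun hh => ?_, ?_⟩
    · rw [Ideal.eq_top_iff_one, hI] at hh
      obtain ⟨m, hm⟩ := hh
      apply (h.1 i).2.2
      simpa using hm
    · rintro ⟨a, ha⟩ ⟨b, hb⟩ ⟨m, hm⟩
      simp only [Subring.coe_mul] at hm
      rcases hcmp a b (hR ha) (hR hb) with ⟨c, hc, e⟩ | ⟨c, hc, e⟩
      · left
        refine ⟨2 * m, ?_⟩
        have := W.mul_mem (W.pow_mem hc m) hm
        convert this using 1
        show a ^ (2 * m) / y i = _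
        rw [pow_mul, ← mul_div_assoc, ← mul_pow, pow_two]
        congr 2
        nth_rewrite 1 [e]; ring
      · right
        refine ⟨2 * m, ?_⟩
        have := W.mul_mem (W.pow_mem hc m) hm
        convert this using 1
        show b ^ (2 * m) / y i = _
        rw [pow_mul, ← mul_div_assoc, ← mul_pow, pow_two]
        congr 2
        nth_rewrite 1 [e]; ring
  have hmem : ∀ i, (⟨y i, hy i⟩ : R) ∈ I i := fun i => ⟨1, by
    simp [div_self (h.1 i).2.1, W.one_mem]⟩
  let p : Fin (s + 1) → PrimeSpectrum R := fun i => Fin.cases ⊥ (fun j => ⟨I j, hIp j⟩) i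
  have hp0 : p 0 = ⊥ := rfl
  have hps : ∀ j : Fin s, p j.succ = ⟨I j, hIp j⟩ := fun _ => rfl
  have hstep : ∀ i : Fin s, p i.castSucc < p i.succ := by
    intro i
    rw [hps, ← PrimeSpectrum.asIdeal_lt_asIdeal]
    rcases Fin.eq_zero_or_eq_succ i.castSucc with h0 | ⟨j, hj⟩
    · rw [h0, hp0]
      refine lt_of_le_of_ne bot_le fun e => ?_
      have := hmem i
      rw [← show _ = I i from e] at this
      have h2 : (⟨y i, hy i⟩ : R) = 0 := by simpa using this
      exact (h.1 i).2.1 (congrArg Subtype.val h2)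
    · rw [hj, hps]
      have hji : j < i := by
        have := congrArg Fin.val hj
        simp at this
        rw [Fin.lt_def]; omega
      refine lt_of_le_of_ne ?_ ?_
      · rintro d ⟨m, hm⟩
        refine ⟨m, ?_⟩
        have h1 : y j / y i ∈ W := by
          rcases hW.2 (y j / y i) (L.div_mem (hW.1 _ (h.1 j).1) (hW.1 _ (h.1 i).1)) with hh | hh
          · exact hh
          · rw [inv_div] at hh
            exact absurd (by simpa using hh) (h.2 j i hji 1)
        have := W.mul_mem hm h1
        rwa [div_mul_div_cancel₀ (h.1 j).2.1] at this
      · intro e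
        have := hmem i
        rw [← show I j = I i from e] at this
        obtain ⟨m, hm⟩ := this
        exact h.2 j i hji m hm
  exact Order.LTSeries.length_le_krullDim (⟨s, p, hstep⟩ : LTSeries (PrimeSpectrum R))

/-- elements from a chain of primes -/
theorem exists_of_series {R : Subring Ω} (l : LTSeries (PrimeSpectrum R)) :
    ∃ y : Fin l.length → Ω, ∀ i, y i ∈ Subtype.val '' ((l i.succ).asIdeal : Set R) ∧
      y i ∉ Subtype.val '' ((l i.castSucc).asIdeal : Set R) := by
  have : ∀ i : Fin l.length, ∃ y : Ω, y ∈ Subtype.val '' ((l i.succ).asIdeal : Set R) ∧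
      y ∉ Subtype.val '' ((l i.castSucc).asIdeal : Set R) := by
    intro i
    have h := l.step i
    have h' : (l i.castSucc).asIdeal < (l i.succ).asIdeal := h
    obtain ⟨x, hx, hx'⟩ := SetLike.exists_of_lt h'
    exact ⟨x, ⟨x, hx, rfl⟩, by rw [mem_img _ x.2]; exact hx'⟩
  choose y hy using this
  exact ⟨y, hy⟩

theorem img_mono {R : Subring Ω} {p q : PrimeSpectrum R} (h : p ≤ q) :
    Subtype.val '' (p.asIdeal : Set R) ⊆ Subtype.val '' (q.asIdeal : Set R) :=
  Set.image_mono h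

/-- a chain in the localization -/
theorem chain_of_series {R : Subring Ω} (l : LTSeries (PrimeSpectrum R)) (Q : PrimeSpectrum R)
    (hQ : l.last ≤ Q) :
    ∃ y : Fin l.length → Ω, Chain (locR (primeSet_of_ideal Q.asIdeal Q.2)) y := by
  obtain ⟨y, hy⟩ := exists_of_series l
  refine ⟨y, fun i => ?_, fun i j hij m => ?_⟩
  · have hp := primeSet_of_ideal _ (l i.succ).2
    have hp' := primeSet_of_ideal _ (l i.castSucc).2
    have hyR := hp.sub _ (hy i).1
    have hQs := primeSet_of_ideal _ Q.2
    have hle : l i.succ ≤ Q := (LTSeries.monotone l (Fin.le_last _)).trans hQ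
    have hy0 : y i ≠ 0 := fun e => (hy i).2 (by rw [e]; exact hp'.zero)
    refine ⟨⟨y i, hyR, 1, R.one_mem, hQs.one, by simp⟩, hy0, ?_⟩
    rintro ⟨a, ha, b, hb, hbQ, e⟩
    apply hbQ
    have hb0 : b ≠ 0 := by rintro rfl; exact hbQ hQs.zero
    have : b = a * y i := by
      rw [eq_div_iff hb0] at e
      rw [← e]; field_simp
    rw [this]
    exact hQs.mul _ ha _ (img_mono hle (hy i).1)
  · rintro ⟨a, ha, b, hb, hbQ, e⟩
    have hp := primeSet_of_ideal _ (l j.castSucc).2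
    have hQs := primeSet_of_ideal _ Q.2
    have hle : l j.castSucc ≤ Q := (LTSeries.monotone l (Fin.le_last _)).trans hQ
    have hb0 : b ≠ 0 := by rintro rfl; exact hbQ hQs.zero
    have hi0 : y i ≠ 0 := fun e => (hy i).2 (by
      rw [e]; exact (primeSet_of_ideal _ (l i.castSucc).2).zero)
    have hij' : l i.succ ≤ l j.castSucc := LTSeries.monotone l (by
      rw [Fin.le_def]; simp; omega)
    have e2 : b * y j ^ m = a * y i := by
      rw [div_eq_div_iff hi0 hb0] at e
      rw [mul_comm, e]
    have hyj : y j ∈ R := (primeSet_of_ideal _ (l j.succ).2).sub _ (hy j).1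
    have h1 : b * y j ^ m ∈ Subtype.val '' ((l j.castSucc).asIdeal : Set R) := by
      rw [e2]; exact hp.mul _ ha _ (img_mono hij' (hy i).1)
    rcases hp.prime _ hb _ (R.pow_mem hyj m) h1 with h | h
    · exact hbQ (img_mono hle h)
    · exact (hy j).2 (hp.pow hyj h)

end TowerAux


namespace TowerAux
open Polynomial WithZero

variable {Ω : Type*} [Field Ω]

theorem fr1 {x d : Ω} (h : d ≠ 0) : x = x / d / (1 / d) := by field_simp
theorem fr2 {x d c : Ω} (hc : c ≠ 0) (h : d ≠ 0) : x = (c * (x / d)) / (c * (1 / d)) := by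
  field_simp
theorem fr3 {x d : Ω} (h : d ≠ 0) : x = x / d * (1 / d)⁻¹ := by field_simp
theorem fr4 {u t w : Ω} {N : ℕ} (ht : t ≠ 0) (h : u + t ^ (N + 1) * w = 1) :
    1 / t = u / t + t ^ N * w := by
  rw [← h]; field_simp; ring
theorem fr5 {u t w : Ω} {N : ℕ} (ht : t ≠ 0) (hu : u ≠ 0) (h : u + t ^ (N + 1) * w = 1) :
    u⁻¹ = 1 + (u / t)⁻¹ * (t ^ N * w) := by
  rw [inv_div, inv_eq_one_div]
  nth_rewrite 1 [← h]; field_simp; ring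

namespace Tower
variable {r : ℕ} (τ : Tower Ω r)

theorem D_DU {n : ℕ} {x : Ω} (h : x ∈ τ.D n) : x ∈ τ.DU := τ.mem_DU.mpr ⟨n, h⟩

theorem DU_KU {x : Ω} (h : x ∈ τ.DU) : x ∈ τ.KU := by
  obtain ⟨n, h⟩ := τ.mem_DU.mp h
  exact τ.mem_KU.mpr ⟨n, τ.D_sub_K h⟩

theorem t_MM (n : ℕ) : τ.t n ∈ τ.MM := ⟨τ.D_DU (τ.t_D n), τ.vt_lt n⟩

theorem P1 {Q : Set Ω} (hQ : PrimeSet τ.DU Q) (hne : Q ≠ τ.MM) :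
    ∃ n0, ∀ n ≥ n0, τ.t n ∉ Q := by
  by_contra! hc
  apply hne
  ext a
  constructor
  · intro ha
    have haD := hQ.sub _ ha
    refine ⟨haD, ?_⟩
    obtain ⟨m, hm⟩ := τ.mem_DU.mp haD
    refine lt_of_le_of_ne (τ.vA (τ.D_sub_A m hm)) fun hv => ?_
    obtain ⟨n, hn, ht⟩ := hc m
    have han : a ∈ τ.D (n + 1) := τ.Dmono (by omega) hm
    obtain ⟨N0, hN⟩ := τ.key_A (τ.A_inv (τ.D_sub_A _ han) hv)
    obtain ⟨h0, -, h2, -⟩ := hN (N0 + 1) (by omega)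
    have ha0 : a ≠ 0 := by rintro rfl; simp at hv
    have hmem : a + τ.t n ^ (N0 + 1) ∈ Q := by
      refine hQ.add _ ha _ ?_
      rw [pow_succ]
      exact hQ.mul _ (τ.DU.pow_mem (τ.D_DU (τ.t_D n)) _) _ ht
    have := hQ.mul _ (τ.D_DU h2) _ hmem
    have e : a⁻¹ / (1 + τ.t n ^ (N0 + 1) * a⁻¹) * (a + τ.t n ^ (N0 + 1)) = 1 := by
      rw [div_mul_eq_mul_div, div_eq_one_iff_eq h0]; field_simp
    rw [e] at this
    exact hQ.one this
  · rintro ⟨haD, hv⟩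
    obtain ⟨m, hm⟩ := τ.mem_DU.mp haD
    obtain ⟨n, hn, ht⟩ := hc m
    have han : a ∈ τ.D (n + 1) := τ.Dmono (by omega) hm
    have := hQ.mul _ (τ.D_DU (τ.sq_div_t han hv)) _ ht
    rw [div_mul_cancel₀ _ (τ.t_ne n)] at this
    exact hQ.pow haD this

theorem exists_frac {n : ℕ} {x : Ω} (hx : x ∈ τ.K (n + 1)) : ∃ a ∈ τ.D (n + 1), ∃ b ∈ τ.D (n + 1),
    ∃ j N : ℕ, b ≠ 0 ∧ x = a / b ∧ τ.t n ^ j = b + τ.t n ^ N * a := by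
  obtain ⟨N, hN⟩ := τ.key hx
  obtain ⟨h0, h1, h2⟩ := hN N le_rfl
  obtain ⟨j1, hj1⟩ := τ.B_to_D n h1 (τ.key_K hx)
  obtain ⟨j2, hj2⟩ := τ.B_to_D n h2 (τ.key_K' hx)
  have ht : τ.t n ^ (max j1 j2) ≠ 0 := pow_ne_zero _ (τ.t_ne n)
  refine ⟨_, hj2 (max j1 j2) (le_max_right _ _), _, hj1 (max j1 j2) (le_max_left _ _),
    max j1 j2, N, ?_, ?_, ?_⟩
  · exact mul_ne_zero ht (one_div_ne_zero h0)
  · exact fr2 ht h0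
  · field_simp

theorem K_succ {n : ℕ} {x : Ω} (h : x ∈ τ.K n) {m : ℕ} (hm : n ≤ m) : x ∈ τ.K (m + 1) :=
  τ.Kmono (by omega) h

theorem mem_qf {x : Ω} : (∃ a ∈ τ.DU, ∃ b ∈ τ.DU, b ≠ 0 ∧ x = a / b) ↔ x ∈ τ.KU := by
  constructor
  · rintro ⟨a, ha, b, hb, -, rfl⟩
    exact τ.KU.div_mem (τ.DU_KU ha) (τ.DU_KU hb)
  · intro h
    obtain ⟨n, hn⟩ := τ.mem_KU.mp h
    obtain ⟨a, ha, b, hb, _, _, h0, e, _⟩ := τ.exists_frac (τ.K_succ hn le_rfl)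
    exact ⟨a, τ.D_DU ha, b, τ.D_DU hb, h0, e⟩

theorem P2 {Q : Set Ω} (hQ : PrimeSet τ.DU Q) (hne : Q ≠ τ.MM) {x : Ω} (hx : x ∈ τ.KU) :
    x ∈ loc τ.DU Q ∨ x⁻¹ ∈ loc τ.DU Q := by
  obtain ⟨n0, hn0⟩ := τ.P1 hQ hne
  obtain ⟨n1, hn1⟩ := τ.mem_KU.mp hx
  have ht := hn0 (max n0 n1) (le_max_left _ _)
  obtain ⟨a, ha, b, hb, j, N, h0, e, e2⟩ := τ.exists_frac (τ.K_succ hn1 (le_max_right n0 n1))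
  have htD := τ.D_DU (τ.t_D (max n0 n1))
  by_cases hbQ : b ∈ Q
  · right
    refine ⟨b, τ.D_DU hb, a, τ.D_DU ha, fun haQ => ht (hQ.pow htD (n := j) ?_), ?_⟩
    · rw [e2]
      exact hQ.add _ hbQ _ (hQ.mul _ (τ.DU.pow_mem htD N) _ haQ)
    · rw [e, inv_div]
  · left
    exact ⟨a, τ.D_DU ha, b, τ.D_DU hb, hbQ, e⟩

theorem P2_isValIn {Q : Set Ω} (hQ : PrimeSet τ.DU Q) (hne : Q ≠ τ.MM) :
    IsValIn (locR hQ) τ.KU := by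
  refine ⟨?_, fun x hx => τ.P2 hQ hne hx⟩
  rintro _ ⟨a, ha, b, hb, -, rfl⟩
  exact τ.KU.div_mem (τ.DU_KU ha) (τ.DU_KU hb)

theorem P3 {x : Ω} (h : ∀ P : Ideal τ.DU, P.IsPrime → Subtype.val '' (P : Set τ.DU) ≠ τ.MM →
    x ∈ loc τ.DU (Subtype.val '' (P : Set τ.DU))) : x ∈ τ.DU := by
  have hK : x ∈ τ.KU := by
    obtain ⟨a, ha, b, hb, -, rfl⟩ := h ⊥ Ideal.isPrime_bot (by
      intro e
      have := τ.t_MM 0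
      rw [← e, mem_img _ (τ.D_DU (τ.t_D 0))] at this
      exact τ.t_ne 0 (congrArg Subtype.val (Ideal.mem_bot.mp this)))
    exact τ.KU.div_mem (τ.DU_KU ha) (τ.DU_KU hb)
  obtain ⟨n, hn⟩ := τ.mem_KU.mp hK
  let I : Ideal τ.DU :=
    { carrier := {d | (d : Ω) * x ∈ τ.DU}
      add_mem' := by
        intro a b ha hb
        simp only [Set.mem_ofPred_eq, Subring.coe_add, add_mul]
        exact τ.DU.add_mem ha hb
      zero_mem' := by simp
      smul_mem' := by
        intro a b hb
        simp only [smul_eq_mul, Set.mem_ofPred_eq, Subring.coe_mul, mul_assoc]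
        exact τ.DU.mul_mem a.2 hb }
  have hrad : (⟨τ.t n, τ.D_DU (τ.t_D n)⟩ : τ.DU) ∈ I.radical := by
    rw [Ideal.radical_eq_sInf, Ideal.mem_sInf]
    rintro P ⟨hIP, hP⟩
    by_contra htP
    have hne : Subtype.val '' (P : Set τ.DU) ≠ τ.MM := by
      intro e
      have := τ.t_MM n
      rw [← e, mem_img _ (τ.D_DU (τ.t_D n))] at this
      exact htP this
    obtain ⟨a, ha, b, hb, hbP, e⟩ := h P hP hne
    rw [mem_img _ hb] at hbP
    apply hbP
    apply hIP
    show b * x ∈ τ.DU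
    have hb0 : b ≠ 0 := by rintro rfl; exact hbP P.zero_mem
    rw [e, mul_div_cancel₀ _ hb0]; exact ha
  obtain ⟨j, hj⟩ := hrad
  have hj' : τ.t n ^ j * x ∈ τ.DU := hj
  have h1 := τ.DU_inter ((τ.K (n+1)).mul_mem ((τ.K (n+1)).pow_mem (τ.t_K n) j)
    (τ.Kmono1 n hn)) hj'
  have h2 := (τ.B n).mul_mem ((τ.B n).pow_mem (τ.T_B n) j) h1.1
  rw [← mul_assoc, ← mul_pow, t, mul_inv_cancel₀ (τ.T_ne n), one_pow, one_mul] at h2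
  exact τ.D_DU (τ.B_inter hn h2)

theorem A_mono' {n m : ℕ} (h : n ≤ m) {x : Ω} (hx : x ∈ τ.A n) : x ∈ τ.A m := by
  induction h with
  | refl => exact hx
  | step _ ih => exact τ.Amono ih

theorem P4 : loc τ.DU τ.MM = {x | ∃ n, x ∈ τ.A n} := by
  ext x
  constructor
  · rintro ⟨a, ha, b, hb, hbM, rfl⟩
    obtain ⟨n, hn⟩ := τ.mem_DU.mp ha
    obtain ⟨m, hm⟩ := τ.mem_DU.mp hb
    have ha' := τ.A_mono' (le_max_left n m) (τ.D_sub_A n hn)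
    have hb' := τ.A_mono' (le_max_right n m) (τ.D_sub_A m hm)
    refine ⟨max n m, ?_⟩
    rw [div_eq_mul_inv]
    refine τ.A_mul ha' (τ.A_inv hb' (le_antisymm (τ.vA hb') (not_lt.mp fun h => hbM ⟨hb, h⟩)))
  · rintro ⟨n, hn⟩
    obtain ⟨N, hN⟩ := τ.key_A (τ.Amono hn)
    obtain ⟨h0, h1, h2, h3⟩ := hN N le_rfl
    refine ⟨_, τ.D_DU h2, _, τ.D_DU h1, fun h => ?_, ?_⟩
    · have := h.2
      rw [map_div₀, h3] at this
      simp at this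
    · exact fr1 h0

theorem A_loc {x : Ω} {n : ℕ} (h : x ∈ τ.A n) : x ∈ loc τ.DU τ.MM := by
  rw [P4]; exact ⟨n, h⟩

/-- powers of elements with v < 1 -/
theorem pow_div_lt {x a : Ω} (hx : τ.v x < 1) (ha : a ≠ 0) : ∃ j : ℕ, τ.v (x ^ j / a) < 1 := by
  have h1 := τ.lt_one_iff.mp hx
  obtain ⟨j, hj⟩ := τ.pow_lt 0 a⁻¹
  refine ⟨j, lt_of_le_of_lt ?_ (hj j le_rfl)⟩
  rw [div_eq_mul_inv, map_mul, map_mul, map_pow, map_pow, vt]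
  exact mul_le_mul_left (pow_le_pow_left₀ zero_le h1 j) _

theorem MM_min {p : Set Ω} (hp : PrimeSet τ.DU p) (hle : p ⊆ τ.MM) {a : Ω} (ha : a ∈ p)
    (ha0 : a ≠ 0) : p = τ.MM := by
  refine Set.Subset.antisymm hle ?_
  rintro x ⟨hxD, hv⟩
  obtain ⟨j, hj⟩ := τ.pow_div_lt hv ha0
  obtain ⟨n, hn⟩ := τ.mem_KU.mp (τ.KU.div_mem (τ.KU.pow_mem (τ.DU_KU hxD) j) (τ.DU_KU (hp.sub _ ha)))
  obtain ⟨c, hc, b, hb, hbM, e⟩ := τ.A_loc (τ.A_of_lt hn hj)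
  have hb0 : b ≠ 0 := by rintro rfl; exact hbM (hle hp.zero)
  have e2 : b * x ^ j = c * a := by
    rw [div_eq_div_iff ha0 hb0] at e; rw [mul_comm, e]
  have : b * x ^ j ∈ p := by rw [e2]; exact hp.mul _ hc _ ha
  rcases hp.prime _ hb _ (τ.DU.pow_mem hxD j) this with h | h
  · exact absurd (hle h) hbM
  · exact hp.pow hxD h

/-- upper bound lemma -/
theorem U (n : ℕ) : ∀ (s : ℕ) (W : Subring Ω), IsValIn W (τ.K n) → τ.D n ⊆ W →
    ∀ y : Fin s → Ω, Chain W y → s ≤ r := by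
  induction n with
  | zero =>
    intro s W hW hD y hy
    exact τ.bound 0 s W hW (fun c hc => hD (τ.A_of_k hc)) y hy
  | succ n ih =>
    intro s W hW hD y hy
    by_cases hT : τ.T n ∈ W
    · have hres := hW.restr (τ.Kmono1 n)
      have hDn : τ.D n ⊆ (W ⊓ (τ.K n).toSubring : Subring Ω) := fun x hx =>
        ⟨hD (τ.Dmono1 n hx), τ.D_sub_K hx⟩
      have hB : kr (τ.D n) (τ.K n) (τ.T n) ⊆ W := by
        intro b hb
        have hbK : b ∈ τ.K (n + 1) :=
          (nagR_isValIn hres (τ.trans n) (τ.gen n)).1 b (hb _ ⟨hDn, hres⟩)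
        obtain ⟨N, hN⟩ := τ.B_to_D n hb hbK
        have := W.mul_mem (W.pow_mem hT N) (hD (hN N le_rfl))
        rwa [← mul_assoc, ← mul_pow, t, mul_inv_cancel₀ (τ.T_ne n), one_pow, one_mul] at this
      have := fun i => gauss_assoc (τ.trans n) (τ.gen n) hW hB (hW.1 _ (hy.1 i).1) (hy.1 i).2.1
      choose y' h1 h2 h3 h4 using this
      exact ih s _ hres hDn y' ((hy.assoc h2 h3 h4).restr _ h1)
    · refine τ.bound (n + 1) s W hW (fun c hc => ?_) y hy
      obtain ⟨N0, hN⟩ := τ.key_A (τ.A_of_k hc)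
      obtain ⟨h0, h1, h2, h3⟩ := hN (N0 + 1) (by omega)
      have ht := hD (τ.t_D n)
      set u := 1 / (1 + τ.t n ^ (N0 + 1) * c) with hu
      set w := c / (1 + τ.t n ^ (N0 + 1) * c) with hw
      have huw : u + τ.t n ^ (N0 + 1) * w = 1 := by rw [hu, hw]; field_simp
      have hu0 : u ≠ 0 := one_div_ne_zero h0
      have hcw : c = w * u⁻¹ := by rw [hu, hw]; exact fr3 h0
      have huW : u⁻¹ ∈ W := by
        have htK := τ.t_K n
        rcases hW.2 (u / τ.t n) ((τ.K _).div_mem (hW.1 _ (hD h1)) htK) with h | h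
        · exfalso
          apply hT
          have : τ.T n = u / τ.t n + τ.t n ^ N0 * w := by
            have h5 := τ.t_ne n
            have h6 : τ.T n = 1 / τ.t n := by rw [t]; simp
            rw [h6]; exact fr4 h5 huw
          rw [this]
          exact W.add_mem h (W.mul_mem (W.pow_mem ht _) (hD h2))
        · have : u⁻¹ = 1 + (u / τ.t n)⁻¹ * (τ.t n ^ N0 * w) := by
            exact fr5 (τ.t_ne n) hu0 huw
          rw [this]
          exact W.add_mem W.one_mem (W.mul_mem h (W.mul_mem (W.pow_mem ht _) (hD h2)))
      rw [hcw]
      exact W.mul_mem (hD h2) huW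

theorem UU (s : ℕ) (W : Subring Ω) (hW : IsValIn W τ.KU) (hD : τ.DU ≤ W)
    (y : Fin s → Ω) (hy : Chain W y) : s ≤ r := by
  have := fun i => τ.mem_KU.mp (hW.1 _ (hy.1 i).1)
  choose n hn using this
  let m := Finset.univ.sup n
  have hm : ∀ i, y i ∈ τ.K m := fun i => τ.Kmono (Finset.le_sup (Finset.mem_univ i)) (hn i)
  have hle : τ.K m ≤ τ.KU := fun x hx => τ.mem_KU.mpr ⟨m, hx⟩
  exact τ.U m s _ (hW.restr hle) (fun x hx => ⟨hD (τ.D_DU hx), τ.D_sub_K hx⟩) y (hy.restr _ hm)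

theorem dimW_le (W : Subring Ω) (hW : IsValIn W τ.KU) (hD : τ.DU ≤ W) :
    ringKrullDim W ≤ (r : WithBot ℕ∞) := by
  refine iSup_le fun l => ?_
  obtain ⟨y, hy⟩ := chain_of_series l l.last le_rfl
  have h1 : W ≤ locR (primeSet_of_ideal l.last.asIdeal l.last.2) := fun x hx =>
    ⟨x, hx, 1, W.one_mem, (primeSet_of_ideal _ l.last.2).one, by simp⟩
  have := τ.UU l.length (locR (primeSet_of_ideal l.last.asIdeal l.last.2)) ⟨?_, ?_⟩
    (hD.trans h1) y hy
  · exact_mod_cast this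
  · rintro _ ⟨a, ha, b, hb, -, rfl⟩
    exact τ.KU.div_mem (hW.1 _ ha) (hW.1 _ hb)
  · intro x hx
    exact (hW.2 x hx).imp (fun h => h1 h) (fun h => h1 h)

theorem dimD_le (hr : 1 ≤ r) : ringKrullDim τ.DU ≤ (r : WithBot ℕ∞) := by
  refine iSup_le fun l => ?_
  have key : l.length ≤ r := by
    have hlast := primeSet_of_ideal _ l.last.2
    by_cases hM : Subtype.val '' (l.last.asIdeal : Set τ.DU) = τ.MM
    · refine le_trans ?_ hr
      by_contra! hlen
      obtain ⟨y, hy⟩ := exists_of_series l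
      have h0 := hy ⟨0, by omega⟩
      have h1 := hy ⟨1, by omega⟩
      have e : (Fin.succ (⟨0, by omega⟩ : Fin l.length)) =
        Fin.castSucc (⟨1, by omega⟩ : Fin l.length) := by ext; simp
      rw [e] at h0
      have hp := primeSet_of_ideal _ (l (Fin.castSucc (⟨1, by omega⟩ : Fin l.length))).2
      have hle : ∀ i, Subtype.val '' ((l i).asIdeal : Set τ.DU) ⊆ τ.MM := fun i => by
        rw [← hM]
        exact img_mono (LTSeries.monotone l (Fin.le_last i))
      have h2 := τ.MM_min hp (hle _) h0.1 (fun e => h0.2 (by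
        rw [e]; exact (primeSet_of_ideal _ (l _).2).zero))
      apply h1.2
      rw [h2]
      exact hle _ h1.1
    · obtain ⟨y, hy⟩ := chain_of_series l l.last le_rfl
      refine τ.UU l.length _ (τ.P2_isValIn hlast hM) (fun x hx => ?_) y hy
      exact ⟨x, hx, 1, τ.DU.one_mem, hlast.one, by simp⟩
  exact_mod_cast key

/-- the big valuation ring -/
def Wseq (W : Subring Ω) (hW : IsValIn W (τ.K 0)) : (n : ℕ) → {W : Subring Ω // IsValIn W (τ.K n)}
  | 0 => ⟨W, hW⟩
  | n + 1 => ⟨nagR (Wseq W hW n).2 (τ.trans n), nagR_isValIn _ _ (τ.gen n)⟩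

theorem exists_big : ∃ W : Subring Ω, IsValIn W τ.KU ∧ τ.DU ≤ W ∧ ∃ y : Fin r → Ω, Chain W y ∧
    ∀ i, y i ∈ τ.DU := by
  obtain ⟨W0, hW0, y, hy⟩ := τ.W1
  set S := fun n => (τ.Wseq W0 hW0.2 n).1 with hS
  have hSv : ∀ n, IsValIn (S n) (τ.K n) := fun n => (τ.Wseq W0 hW0.2 n).2
  have hSs : ∀ n x, x ∈ S (n + 1) ↔ x ∈ nag (S n : Set Ω) (τ.T n) := fun n x => Iff.rfl
  have hmono1 : ∀ n, S n ≤ S (n + 1) := fun n x hx => mem_nag_of_mem hx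
  have hmono : Monotone S := monotone_nat_of_le_succ hmono1
  have hSD : ∀ n, τ.D n ⊆ S n := by
    intro n
    induction n with
    | zero => exact hW0.1
    | succ n ih => exact fun x hx => hx.1 (S n) ⟨ih, hSv n⟩
  have hT : ∀ n, τ.T n ∈ S (n + 1) := fun n => by
    exact T_mem_kr (D := τ.D n) (L := τ.K n) (S n) ⟨hSD n, hSv n⟩
  have hinter : ∀ n m, n ≤ m → ∀ x ∈ τ.K n, x ∈ S m → x ∈ S n := by
    intro n m hnm x hx h
    induction hnm with
    | refl => exact h
    | step hnm ih => exact ih (mem_of_mem_nag (hSv _) (τ.trans _) (τ.Kmono hnm hx) h)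
  let W : Subring Ω := ⨆ n, S n
  have hmem : ∀ x, x ∈ W ↔ ∃ n, x ∈ S n := fun x =>
    Subring.mem_iSup_of_directed (Monotone.directed_le hmono)
  have hW : IsValIn W τ.KU := by
    constructor
    · intro x hx
      obtain ⟨n, hn⟩ := (hmem x).mp hx
      exact τ.mem_KU.mpr ⟨n, (hSv n).1 _ hn⟩
    · intro x hx
      obtain ⟨n, hn⟩ := τ.mem_KU.mp hx
      rw [hmem, hmem]
      exact ((hSv n).2 x hn).imp (fun h => ⟨n, h⟩) (fun h => ⟨n, h⟩)
  have hWD : τ.DU ≤ W := by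
    intro x hx
    obtain ⟨n, hn⟩ := τ.mem_DU.mp hx
    exact (hmem x).mpr ⟨n, hSD n hn⟩
  have hy0 : ∀ i, y i ∈ τ.K 0 := fun i => hW0.2.1 _ (hy.1 i).1
  have hW0mem : ∀ x ∈ τ.K 0, x ∈ W → x ∈ W0 := by
    intro x hx h
    obtain ⟨n, hn⟩ := (hmem x).mp h
    exact hinter 0 n (Nat.zero_le n) x hx hn
  have hle : W0 ≤ W := fun x hx => (hmem x).mpr ⟨0, hx⟩
  have hyW : Chain W y := ⟨fun i => ⟨hle (hy.1 i).1, (hy.1 i).2.1, fun h => (hy.1 i).2.2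
      (hW0mem _ ((τ.K 0).inv_mem (hy0 i)) h)⟩, fun i j hij m h => hy.2 i j hij m
      (hW0mem _ ((τ.K 0).div_mem ((τ.K 0).pow_mem (hy0 j) m) (hy0 i)) h)⟩
  have hTW : ∀ n, τ.T n ∈ W := fun n => (hmem _).mpr ⟨_, hT n⟩
  have hassoc : ∀ x ∈ W, x ≠ 0 → ∃ d ∈ τ.DU, d ≠ 0 ∧ x / d ∈ W ∧ d / x ∈ W := by
    intro x hx hx0
    obtain ⟨n, hn⟩ := τ.mem_KU.mp (hW.1 x hx)
    obtain ⟨a, ha, b, hb, j, N, hb0, e, e2⟩ := τ.exists_frac (τ.Kmono1 n hn)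
    have hTt : τ.T n * τ.t n = 1 := by rw [t, mul_inv_cancel₀ (τ.T_ne n)]
    have htW : τ.t n ∈ W := hWD (τ.D_DU (τ.t_D n))
    have hax : a = x * b := by rw [e, div_mul_cancel₀ _ hb0]
    have hbW : b⁻¹ ∈ W := by
      have h3 : b⁻¹ = τ.T n ^ j * (1 + τ.t n ^ N * x) := by
        refine inv_eq_of_mul_eq_one_right ?_
        calc b * (τ.T n ^ j * (1 + τ.t n ^ N * x)) = τ.T n ^ j * (b + τ.t n ^ N * (x * b)) := by ring
          _ = 1 := by rw [← hax, ← e2, ← mul_pow, hTt, one_pow]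
      rw [h3]
      exact W.mul_mem (W.pow_mem (hTW n) j) (W.add_mem W.one_mem (W.mul_mem (W.pow_mem htW N) hx))
    refine ⟨a, τ.D_DU ha, ?_, ?_, ?_⟩
    · rw [hax]; exact mul_ne_zero hx0 hb0
    · have : x / a = b⁻¹ := by rw [hax]; field_simp
      rwa [this]
    · have : a / x = b := by rw [hax]; field_simp
      rw [this]; exact hWD (τ.D_DU hb)
  have := fun i => hassoc (y i) (hyW.1 i).1 (hyW.1 i).2.1
  choose d h1 h2 h3 h4 using this
  exact ⟨W, hW, hWD, d, hyW.assoc h2 h3 h4, h1⟩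

theorem dimD (hr : 1 ≤ r) : ringKrullDim τ.DU = (r : WithBot ℕ∞) := by
  obtain ⟨W, hW, hWD, y, hy, hyD⟩ := τ.exists_big
  exact le_antisymm (τ.dimD_le hr) (le_dim_of_chain hW hWD hy hyD)

theorem exists_dimW : ∃ W : Subring Ω, IsValIn W τ.KU ∧ τ.DU ≤ W ∧
    (r : WithBot ℕ∞) ≤ ringKrullDim W := by
  obtain ⟨W, hW, hWD, y, hy, hyD⟩ := τ.exists_big
  exact ⟨W, hW, hWD, le_dim_of_chain hW le_rfl hy (fun i => hWD (hyD i))⟩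

theorem not_ess {z : Ω} (hz : z ∈ τ.K 0) (hz1 : ∀ n, z ∉ τ.A n) (hz2 : ∀ n, z⁻¹ ∉ τ.A n)
    (R : Subring Ω) (hR : ∀ x, x ∈ R ↔ ∃ n, x ∈ τ.A n) (Δ : Set (Ideal R))
    (hΔ : ∀ p ∈ Δ, p.IsPrime)
    (hv : ∀ p ∈ Δ, ∀ x, (∃ a ∈ R, ∃ b ∈ R, b ≠ 0 ∧ x = a / b) →
      x ∈ loc R (Subtype.val '' (p : Set R)) ∨ x⁻¹ ∈ loc R (Subtype.val '' (p : Set R)))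
    (hi : ∀ x, (∀ p ∈ Δ, x ∈ loc R (Subtype.val '' (p : Set R))) → x ∈ R) : False := by
  have hvR : ∀ x ∈ R, τ.v x ≤ 1 := by
    intro x hx
    obtain ⟨n, hn⟩ := (hR x).mp hx
    exact τ.vA hn
  have hRK : ∀ x ∈ R, x ∈ τ.KU := by
    intro x hx
    obtain ⟨n, hn⟩ := (hR x).mp hx
    exact τ.mem_KU.mpr ⟨n, hn.1⟩
  have hRlt : ∀ x ∈ τ.KU, τ.v x < 1 → x ∈ R := by
    intro x hx h
    obtain ⟨n, hn⟩ := τ.mem_KU.mp hx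
    exact (hR x).mpr ⟨n, τ.A_of_lt hn h⟩
  have htK : τ.t 0 ∈ τ.KU := τ.mem_KU.mpr ⟨_, τ.t_K 0⟩
  have htR := hRlt _ htK (τ.vt_lt 0)
  have hzK : z ∈ τ.KU := τ.mem_KU.mpr ⟨0, hz⟩
  have hz0 : z ≠ 0 := by
    rintro rfl
    exact hz1 0 (τ.A_of_k (τ.k 0).zero_mem)
  have hbot : ∀ p ∈ Δ, ∀ x ∈ p, x = 0 := by
    intro p hp a ha
    by_contra ha0
    have hP := primeSet_of_ideal p (hΔ p hp)
    have haP : (a : Ω) ∈ Subtype.val '' (p : Set R) := ⟨a, ha, rfl⟩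
    have ha0' : (a : Ω) ≠ 0 := fun h => ha0 (Subtype.ext h)
    have hM : ∀ x ∈ R, τ.v x < 1 → x ∈ Subtype.val '' (p : Set R) := by
      intro x hx hvx
      obtain ⟨j, hj⟩ := τ.pow_div_lt hvx ha0'
      have h1 := hRlt _ (τ.KU.div_mem (τ.KU.pow_mem (hRK x hx) j) (hRK _ a.2)) hj
      have h2 := hP.mul _ h1 _ haP
      rw [div_mul_cancel₀ _ ha0'] at h2
      exact hP.pow hx h2
    have hno : ∀ x, x ∈ loc R (Subtype.val '' (p : Set R)) → ∃ n, x ∈ τ.A n := by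
      rintro _ ⟨c, hc, b, hb, hbp, rfl⟩
      obtain ⟨n, hn⟩ := (hR b).mp hb
      have h1 : τ.v b = 1 := le_antisymm (hvR b hb) (not_lt.mp fun h => hbp (hM b hb h))
      rw [← hR, div_eq_mul_inv]
      exact R.mul_mem hc ((hR _).mpr ⟨n, τ.A_inv hn h1⟩)
    obtain ⟨j, hj⟩ := τ.pow_lt 0 z
    have h1 : τ.t 0 ^ (j + 1) * z ∈ R := hRlt _ (τ.KU.mul_mem (τ.KU.pow_mem htK _) hzK)
      (hj _ (by omega))
    rcases hv p hp z ⟨_, h1, _, R.pow_mem htR (j + 1), pow_ne_zero _ (τ.t_ne 0), by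
      have := τ.t_ne 0; field_simp⟩ with h | h
    · obtain ⟨n, hn⟩ := hno _ h; exact hz1 n hn
    · obtain ⟨n, hn⟩ := hno _ h; exact hz2 n hn
  have hTR := hi (τ.T 0) (fun p hp => ⟨1, R.one_mem, τ.t 0, htR, fun h => by
    rw [mem_img _ htR] at h
    exact τ.t_ne 0 (congrArg Subtype.val (hbot p hp _ h)), by rw [t]; simp⟩)
  have := hvR _ hTR
  rw [τ.vT, ← exp_zero, exp_le_exp] at this
  norm_num at this

end Tower
end TowerAux


namespace TowerAux
open Polynomial WithZero

variable {Ω : Type*} [Field Ω]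

theorem exists_map {L : Subfield Ω} {f : Polynomial Ω} (hf : ∀ i, f.coeff i ∈ L) :
    ∃ g : Polynomial L, g.map L.subtype = f := by
  rw [← Polynomial.mem_lifts, Polynomial.lifts_iff_coeff_lifts]
  intro n; simpa using hf n

theorem coeff_map_mem {L : Subfield Ω} (g : Polynomial L) (i : ℕ) :
    (g.map L.subtype).coeff i ∈ L := by
  rw [coeff_map]; exact (g.coeff i).2

theorem genBy_closure (L : Subfield Ω) (T : Ω) :
    GenBy L (Subfield.closure (L ∪ {T})) T := by
  refine ⟨fun x hx => Subfield.subset_closure (Or.inl hx), Subfield.subset_closure (Or.inr rfl), ?_⟩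
  intro x hx
  have h1 : x ∈ IntermediateField.adjoin L {T} := by
    have : Subfield.closure ((L : Set Ω) ∪ {T}) ≤ (IntermediateField.adjoin L {T}).toSubfield := by
      rw [Subfield.closure_le]
      rintro z (hz | hz)
      · exact (IntermediateField.adjoin L {T}).algebraMap_mem ⟨z, hz⟩
      · exact IntermediateField.subset_adjoin _ _ hz
    exact this hx
  obtain ⟨f, g, e⟩ := IntermediateField.mem_adjoin_simple_iff L x |>.mp h1
  have hev : ∀ f : Polynomial L, aeval T f = (f.map L.subtype).eval T := fun f => by
    rw [aeval_def, eval_map]; rfl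
  rw [hev, hev] at e
  by_cases h0 : (g.map L.subtype).eval T = 0
  · rw [h0, div_zero] at e
    refine ⟨0, 1, by simp, fun i => ?_, by simp, by simp [e]⟩
    rw [coeff_one]; split_ifs <;> simp
  · exact ⟨_, _, coeff_map_mem f, coeff_map_mem g, h0, e⟩

theorem Trans.add {L : Subfield Ω} {T c : Ω} (hT : Trans L T) (hc : c ∈ L) : Trans L (T + c) := by
  intro f hf h
  obtain ⟨g, rfl⟩ := exists_map hf
  have h1 : (g.comp (X + C ⟨c, hc⟩)).map L.subtype = 0 := by
    apply hT _ (coeff_map_mem _)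
    rw [map_comp, eval_comp]
    simpa using h
  rw [map_comp] at h1
  have h2 := congrArg (fun p => p.comp (X - C c)) h1
  simp only [Polynomial.map_add, map_X, map_C, comp_assoc, zero_comp] at h2
  simpa using h2

theorem clos_y (F : Subfield Ω) (y : Ω) : y ∈ Subring.closure ((F : Set Ω) ∪ {y}) :=
  Subring.subset_closure (Set.mem_union_right _ (Set.mem_singleton y))

theorem clos_F (F : Subfield Ω) (y : Ω) {c : Ω} (hc : c ∈ F) :
    c ∈ Subring.closure ((F : Set Ω) ∪ {y}) :=
  Subring.subset_closure (Set.mem_union_left _ hc)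

structure Ext (F L : Subfield Ω) (y : Ω) (v : Valuation Ω ℤᵐ⁰) : Prop where
  cl : L = Subfield.closure (F ∪ {y})
  vy : v y = exp (-1 : ℤ)
  vF : ∀ c ∈ F, c ≠ 0 → v c = 1

namespace Ext
variable {F L : Subfield Ω} {y : Ω} {v : Valuation Ω ℤᵐ⁰}

theorem FL (h : Ext F L y v) : F ≤ L := fun x hx => by rw [h.cl]; exact Subfield.subset_closure (Or.inl hx)
theorem yL (h : Ext F L y v) : y ∈ L := by rw [h.cl]; exact Subfield.subset_closure (Or.inr rfl)
theorem gen (h : Ext F L y v) : GenBy F L y := by rw [h.cl]; exact genBy_closure F y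

theorem vy_lt (h : Ext F L y v) : v y < 1 := by rw [h.vy, ← exp_zero, exp_lt_exp]; norm_num
theorem y0 (h : Ext F L y v) : y ≠ 0 := by
  rintro rfl
  have := h.vy
  rw [map_zero] at this
  exact exp_ne_zero this.symm

theorem vF' (h : Ext F L y v) {c : Ω} (hc : c ∈ F) : v c ≤ 1 := by
  by_cases h0 : c = 0
  · simp [h0]
  · exact (h.vF c hc h0).le

theorem F_lt (h : Ext F L y v) {c : Ω} (hc : c ∈ F) (hv : v c < 1) : c = 0 := by
  by_contra h0
  exact hv.ne (h.vF c hc h0)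

theorem lt_one_iff {x : Ω} : v x < 1 ↔ v x ≤ exp (-1 : ℤ) := by
  constructor
  · intro h
    by_cases hx : v x = 0
    · rw [hx]; exact zero_le
    · rw [← exp_log hx, ← exp_zero, exp_lt_exp] at h
      rw [← exp_log hx, exp_le_exp]; omega
  · intro h
    exact lt_of_le_of_lt h (by rw [← exp_zero, exp_lt_exp]; norm_num)

/-- polynomial ring elements -/
theorem P_split (h : Ext F L y v) {p : Ω} (hp : p ∈ Subring.closure ((F : Set Ω) ∪ {y})) :
    ∃ c ∈ F, ∃ q ∈ Subring.closure ((F : Set Ω) ∪ {y}), p = c + y * q := by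
  have hy : y ∈ Subring.closure ((F : Set Ω) ∪ {y}) := Subring.subset_closure (Or.inr rfl)
  have hF : ∀ c ∈ F, c ∈ Subring.closure ((F : Set Ω) ∪ {y}) :=
    fun c hc => Subring.subset_closure (Or.inl hc)
  induction hp using Subring.closure_induction with
  | mem x hx =>
    rcases hx with hx | hx
    · exact ⟨x, hx, 0, Subring.zero_mem _, by simp⟩
    · exact ⟨0, F.zero_mem, 1, Subring.one_mem _, by rw [Set.mem_singleton_iff.mp hx]; simp⟩
  | zero => exact ⟨0, F.zero_mem, 0, Subring.zero_mem _, by simp⟩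
  | one => exact ⟨1, F.one_mem, 0, Subring.zero_mem _, by simp⟩
  | add a b _ _ ha hb =>
    obtain ⟨c, hc, q, hq, rfl⟩ := ha
    obtain ⟨c', hc', q', hq', rfl⟩ := hb
    exact ⟨c + c', F.add_mem hc hc', q + q', Subring.add_mem _ hq hq', by ring⟩
  | neg a _ ha =>
    obtain ⟨c, hc, q, hq, rfl⟩ := ha
    exact ⟨-c, F.neg_mem hc, -q, Subring.neg_mem _ hq, by ring⟩
  | mul a b _ _ ha hb =>
    obtain ⟨c, hc, q, hq, rfl⟩ := ha
    obtain ⟨c', hc', q', hq', rfl⟩ := hb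
    refine ⟨c * c', F.mul_mem hc hc', c * q' + c' * q + y * q * q', ?_, by ring⟩
    exact Subring.add_mem _ (Subring.add_mem _ (Subring.mul_mem _ (hF c hc) hq')
      (Subring.mul_mem _ (hF c' hc') hq)) (Subring.mul_mem _ (Subring.mul_mem _ hy hq) hq')

theorem P_v (h : Ext F L y v) {p : Ω} (hp : p ∈ Subring.closure ((F : Set Ω) ∪ {y})) : v p ≤ 1 := by
  induction hp using Subring.closure_induction with
  | mem x hx =>
    rcases hx with hx | hx
    · exact h.vF' hx
    · rw [Set.mem_singleton_iff.mp hx]; exact h.vy_lt.le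
  | zero => simp
  | one => simp
  | add a b _ _ ha hb => exact (v.map_add a b).trans (max_le ha hb)
  | neg a _ ha => rwa [Valuation.map_neg]
  | mul a b _ _ ha hb => rw [map_mul]; exact mul_le_one' ha hb

theorem P_div (h : Ext F L y v) {p : Ω} (hp : p ∈ Subring.closure ((F : Set Ω) ∪ {y})) (hv : v p < 1) :
    ∃ q ∈ Subring.closure ((F : Set Ω) ∪ {y}), p = y * q := by
  obtain ⟨c, hc, q, hq, rfl⟩ := h.P_split hp
  have : c = 0 := by
    apply h.F_lt hc
    have e : c = (c + y * q) - y * q := by ring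
    rw [e]
    refine lt_of_le_of_lt (v.map_sub _ _) (max_lt hv ?_)
    rw [map_mul]
    exact (mul_le_of_le_one_right' (h.P_v hq)).trans_lt h.vy_lt
  exact ⟨q, hq, by rw [this, zero_add]⟩

theorem P_strip (h : Ext F L y v) {p : Ω} (hp : p ∈ Subring.closure ((F : Set Ω) ∪ {y})) (h0 : p ≠ 0) :
    ∃ a : ℕ, ∃ q ∈ Subring.closure ((F : Set Ω) ∪ {y}), v q = 1 ∧ p = y ^ a * q := by
  have key : ∀ N : ℕ, ∀ p ∈ Subring.closure ((F : Set Ω) ∪ {y}), p ≠ 0 → -(N : ℤ) ≤ log (v p) →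
      ∃ a : ℕ, ∃ q ∈ Subring.closure ((F : Set Ω) ∪ {y}), v q = 1 ∧ p = y ^ a * q := by
    intro N
    induction N with
    | zero =>
      intro p hp h0 hN
      refine ⟨0, p, hp, ?_, by simp⟩
      have hv0 : v p ≠ 0 := (Valuation.ne_zero_iff v).mpr h0
      refine le_antisymm (h.P_v hp) ?_
      rw [← exp_log hv0, ← exp_zero, exp_le_exp]
      simpa using hN
    | succ N ih =>
      intro p hp h0 hN
      by_cases hv : v p < 1
      · obtain ⟨q, hq, rfl⟩ := h.P_div hp hv
        have hq0 : q ≠ 0 := by rintro rfl; simp at h0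
        have hv0 : v q ≠ 0 := (Valuation.ne_zero_iff v).mpr hq0
        have hvy0 : v y ≠ 0 := (Valuation.ne_zero_iff v).mpr h.y0
        rw [map_mul, log_mul hvy0 hv0, h.vy, log_exp] at hN
        obtain ⟨a, q', hq', hv', e⟩ := ih q hq hq0 (by push_cast at hN; omega)
        exact ⟨a + 1, q', hq', hv', by rw [e]; ring⟩
      · exact ⟨0, p, hp, le_antisymm (h.P_v hp) (not_lt.mp hv), by simp⟩
  refine key (log (v p)).natAbs p hp h0 ?_
  omega

theorem L_frac (h : Ext F L y v) {x : Ω} (hx : x ∈ L) (hx0 : x ≠ 0) : ∃ a b : ℕ,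
    ∃ p ∈ Subring.closure ((F : Set Ω) ∪ {y}), ∃ q ∈ Subring.closure ((F : Set Ω) ∪ {y}),
      v p = 1 ∧ v q = 1 ∧ x = (y ^ a * p) / (y ^ b * q) := by
  obtain ⟨f, g, hf, hg, hg0, rfl⟩ := h.gen.2.2 x hx
  have hev : ∀ f : Polynomial Ω, (∀ i, f.coeff i ∈ F) →
      f.eval y ∈ Subring.closure ((F : Set Ω) ∪ {y}) := fun f hf =>
    eval_mem' (clos_y F y) fun i => clos_F F y (hf i)
  have hf0 : f.eval y ≠ 0 := fun e => by simp [e] at hx0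
  obtain ⟨a, p, hp, hvp, e⟩ := h.P_strip (hev f hf) hf0
  obtain ⟨b, q, hq, hvq, e'⟩ := h.P_strip (hev g hg) hg0
  exact ⟨a, b, p, hp, q, hq, hvp, hvq, by rw [e, e']⟩

theorem PL (h : Ext F L y v) {p : Ω} (hp : p ∈ Subring.closure ((F : Set Ω) ∪ {y})) : p ∈ L := by
  have : Subring.closure ((F : Set Ω) ∪ {y}) ≤ L.toSubring := by
    rw [Subring.closure_le]
    rintro z (hz | hz)
    · exact h.FL hz
    · rw [Set.mem_singleton_iff.mp hz]; exact h.yL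
  exact this hp

theorem v_frac (h : Ext F L y v) {a b : ℕ} {p q : Ω} (hp : v p = 1) (hq : v q = 1) :
    v ((y ^ a * p) / (y ^ b * q)) = exp ((b : ℤ) - a) := by
  rw [map_div₀, map_mul, map_mul, map_pow, map_pow, hp, hq, h.vy, mul_one, mul_one, ← exp_nsmul,
    ← exp_nsmul, ← exp_sub]
  congr 1
  simp only [nsmul_eq_mul]
  ring

/-- the maximal ideal -/
theorem mem_M (h : Ext F L y v) {x : Ω} : (∃ w, (∃ f ∈ Subring.closure ((F : Set Ω) ∪ {y}),
    ∃ g ∈ Subring.closure ((F : Set Ω) ∪ {y}),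
    (¬ ∃ q ∈ Subring.closure ((F : Set Ω) ∪ {y}), g = y * q) ∧ w = f / g) ∧ x = y * w) ↔
    (x ∈ L ∧ v x < 1) := by
  constructor
  · rintro ⟨_, ⟨f, hf, g, hg, hgy, rfl⟩, rfl⟩
    have hvg : v g = 1 := le_antisymm (h.P_v hg) (not_lt.mp fun hh => hgy (h.P_div hg hh))
    refine ⟨L.mul_mem h.yL (L.div_mem (h.PL hf) (h.PL hg)), ?_⟩
    rw [map_mul, map_div₀, hvg, div_one]
    exact (mul_le_of_le_one_right' (h.P_v hf)).trans_lt h.vy_lt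
  · rintro ⟨hx, hv⟩
    have hyP : y ∈ Subring.closure ((F : Set Ω) ∪ {y}) := Subring.subset_closure (Or.inr rfl)
    have hnd : ∀ g, v g = 1 → ¬ ∃ q ∈ Subring.closure ((F : Set Ω) ∪ {y}), g = y * q := by
      rintro _ hg ⟨q, hq, rfl⟩
      rw [map_mul] at hg
      exact ((mul_le_of_le_one_right' (h.P_v hq)).trans_lt h.vy_lt).ne hg
    by_cases hx0 : x = 0
    · exact ⟨0, ⟨0, Subring.zero_mem _, 1, Subring.one_mem _, hnd 1 (by simp), by simp⟩, by simp [hx0]⟩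
    obtain ⟨a, b, p, hp, q, hq, hvp, hvq, rfl⟩ := h.L_frac hx hx0
    rw [h.v_frac hvp hvq, ← exp_zero, exp_lt_exp] at hv
    obtain ⟨c, rfl⟩ : ∃ c, a = b + 1 + c := ⟨a - b - 1, by omega⟩
    refine ⟨(y ^ c * p) / q, ⟨y ^ c * p, Subring.mul_mem _ (Subring.pow_mem _ hyP c) hp, q, hq,
      hnd q hvq, rfl⟩, ?_⟩
    have := h.y0
    have hq0 : q ≠ 0 := by rintro rfl; simp at hvq
    field_simp
    ring

theorem res (h : Ext F L y v) {x : Ω} (hx : x ∈ L) (hv : v x ≤ 1) : ∃ c ∈ F, v (x - c) < 1 := by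
  rcases hv.lt_or_eq with hv | hv
  · exact ⟨0, F.zero_mem, by simpa using hv⟩
  have hx0 : x ≠ 0 := by rintro rfl; simp at hv
  obtain ⟨a, b, p, hp, q, hq, hvp, hvq, rfl⟩ := h.L_frac hx hx0
  rw [h.v_frac hvp hvq, ← exp_zero, exp_inj] at hv
  obtain rfl : a = b := by omega
  obtain ⟨c, hc, p', hp', rfl⟩ := h.P_split hp
  obtain ⟨d, hd, q', hq', rfl⟩ := h.P_split hq
  have hlt : ∀ z ∈ Subring.closure ((F : Set Ω) ∪ {y}), v (y * z) < 1 := fun z hz => by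
    rw [map_mul]
    exact (mul_le_of_le_one_right' (h.P_v hz)).trans_lt h.vy_lt
  have hd0 : d ≠ 0 := by
    rintro rfl
    rw [zero_add] at hvq
    exact (hlt _ hq').ne hvq
  have hq0 : d + y * q' ≠ 0 := by intro e; rw [e] at hvq; simp at hvq
  refine ⟨c / d, F.div_mem hc hd, ?_⟩
  have hy0 := h.y0
  have e : y ^ a * (c + y * p') / (y ^ a * (d + y * q')) - c / d =
      (y * p' * d - y * q' * c) / ((d + y * q') * d) := by
    rw [mul_div_mul_left _ _ (pow_ne_zero a hy0), div_sub_div _ _ hq0 hd0]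
    congr 1
    ring
  rw [e, map_div₀, map_mul, hvq, h.vF d hd hd0, one_mul, div_one]
  refine lt_of_le_of_lt (v.map_sub _ _) (max_lt ?_ ?_) <;> rw [map_mul]
  · exact (mul_le_of_le_one_right' (h.vF' hd)).trans_lt (hlt _ hp')
  · exact (mul_le_of_le_one_right' (h.vF' hc)).trans_lt (hlt _ hq')

theorem trans (h : Ext F L y v) : Trans F y := by
  intro f hf he
  by_contra h0
  obtain ⟨g, hg⟩ : ∃ g, f = X ^ f.natTrailingDegree * g := by
    have := (X_pow_dvd_iff (f := f) (n := f.natTrailingDegree)).mpr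
      fun d hd => coeff_eq_zero_of_lt_natTrailingDegree hd
    exact this
  set m := f.natTrailingDegree with hm
  have hgc : ∀ i, g.coeff i = f.coeff (i + m) := fun i => by
    rw [hg, mul_comm, coeff_mul_X_pow]
  have hg0 : g.coeff 0 ≠ 0 := by
    rw [hgc, zero_add]
    exact trailingCoeff_nonzero_iff_nonzero.mpr h0
  have hgF : ∀ i, g.coeff i ∈ F := fun i => by rw [hgc]; exact hf _
  have hgy : g.eval y = 0 := by
    rw [hg, eval_mul, eval_pow, eval_X] at he
    exact (mul_eq_zero.mp he).resolve_left (pow_ne_zero _ h.y0)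
  rw [← divX_mul_X_add g, eval_add, eval_mul, eval_X, eval_C] at hgy
  have hev : g.divX.eval y ∈ Subring.closure ((F : Set Ω) ∪ {y}) :=
    eval_mem' (clos_y F y) fun i => clos_F F y (by rw [coeff_divX]; exact hgF _)
  have : g.coeff 0 = - (y * g.divX.eval y) := by
    rw [eq_neg_iff_add_eq_zero, add_comm, mul_comm]; exact hgy
  apply hg0
  apply h.F_lt (hgF 0)
  rw [this, Valuation.map_neg, map_mul]
  exact (mul_le_of_le_one_right' (h.P_v hev)).trans_lt h.vy_lt

/-- composite valuation rings -/
theorem comp (h : Ext F L y v) {W0 : Subring Ω} (hW : IsValIn W0 F) {s : ℕ} {z : Fin s → Ω} (hz : Chain W0 z) :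
    ∃ W : Subring Ω, IsValIn W L ∧ W0 ≤ W ∧ (∀ x ∈ L, ∀ c ∈ W0, v (x - c) < 1 → x ∈ W) ∧
      (∀ x ∈ F, x ∈ W → x ∈ W0) ∧ (∀ x ∈ W, v x ≤ 1) ∧
      ∃ z' : Fin (s + 1) → Ω, Chain W z' := by
  let W : Subring Ω :=
    { carrier := {x | x ∈ L ∧ ∃ c ∈ W0, v (x - c) < 1}
      mul_mem' := by
        rintro a b ⟨ha, c, hc, h1⟩ ⟨hb, c', hc', h2⟩
        refine ⟨L.mul_mem ha hb, c * c', W0.mul_mem hc hc', ?_⟩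
        have e : a * b - c * c' = (a - c) * (b - c') + (a - c) * c' + (b - c') * c := by ring
        rw [e]
        refine lt_of_le_of_lt (v.map_add _ _) (max_lt (lt_of_le_of_lt (v.map_add _ _)
          (max_lt ?_ ?_)) ?_) <;> rw [map_mul]
        · exact (mul_le_of_le_one_right' h2.le).trans_lt h1
        · exact (mul_le_of_le_one_right' (h.vF' (hW.1 _ hc'))).trans_lt h1
        · exact (mul_le_of_le_one_right' (h.vF' (hW.1 _ hc))).trans_lt h2
      one_mem' := ⟨L.one_mem, 1, W0.one_mem, by simp⟩
      add_mem' := by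
        rintro a b ⟨ha, c, hc, h1⟩ ⟨hb, c', hc', h2⟩
        refine ⟨L.add_mem ha hb, c + c', W0.add_mem hc hc', ?_⟩
        rw [add_sub_add_comm]
        exact lt_of_le_of_lt (v.map_add _ _) (max_lt h1 h2)
      zero_mem' := ⟨L.zero_mem, 0, W0.zero_mem, by simp⟩
      neg_mem' := by
        rintro a ⟨ha, c, hc, h1⟩
        refine ⟨L.neg_mem ha, -c, W0.neg_mem hc, ?_⟩
        rwa [← neg_sub', Valuation.map_neg] }
  have hmem : ∀ x, x ∈ W ↔ x ∈ L ∧ ∃ c ∈ W0, v (x - c) < 1 := fun x => Iff.rfl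
  have hle : W0 ≤ W := fun x hx => ⟨h.FL (hW.1 _ hx), x, hx, by simp⟩
  have hvW : ∀ x ∈ W, v x ≤ 1 := by
    rintro x ⟨-, c, hc, h1⟩
    have e : x = (x - c) + c := by ring
    rw [e]
    exact (v.map_add _ _).trans (max_le h1.le (h.vF' (hW.1 _ hc)))
  have hWF : ∀ x ∈ F, x ∈ W → x ∈ W0 := by
    rintro x hx ⟨-, c, hc, h1⟩
    have := h.F_lt (F.sub_mem hx (hW.1 _ hc)) h1
    rw [sub_eq_zero.mp this]; exact hc
  have hval : ∀ x ∈ L, x ∈ W ∨ x⁻¹ ∈ W := by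
    intro x hx
    by_cases hv : v x ≤ 1
    · obtain ⟨c, hc, h1⟩ := h.res hx hv
      rcases hW.2 c hc with h2 | h2
      · exact Or.inl ⟨hx, c, h2, h1⟩
      · by_cases hc0 : c = 0
        · exact Or.inl ⟨hx, 0, W0.zero_mem, by rwa [hc0] at h1⟩
        have hx1 : v x = 1 := by
          refine le_antisymm hv (not_lt.mp fun hlt => ?_)
          have : v c < 1 := by
            have e : c = x - (x - c) := by ring
            rw [e]
            exact lt_of_le_of_lt (v.map_sub _ _) (max_lt hlt h1)
          exact hc0 (h.F_lt hc this)
        have hx0 : x ≠ 0 := by rintro rfl; simp at hx1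
        refine Or.inr ⟨L.inv_mem hx, c⁻¹, h2, ?_⟩
        have e : x⁻¹ - c⁻¹ = -(x - c) * x⁻¹ * c⁻¹ := by field_simp; ring
        rw [e, map_mul, map_mul, Valuation.map_neg, map_inv₀, map_inv₀, hx1, h.vF c hc hc0]
        simpa using h1
    · refine Or.inr ⟨L.inv_mem hx, 0, W0.zero_mem, ?_⟩
      rw [sub_zero, map_inv₀]
      exact inv_lt_one_of_one_lt₀ (not_le.mp hv)
  have hvinv : 1 < v y⁻¹ := by
    rw [map_inv₀, h.vy, ← exp_neg, ← exp_zero, exp_lt_exp]; norm_num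
  refine ⟨W, ⟨fun x hx => hx.1, hval⟩, hle, fun x hx c hc h1 => ⟨hx, c, hc, h1⟩, hWF, hvW,
    Fin.cons y z, ?_, ?_⟩
  · intro i
    refine Fin.cases ?_ (fun i => ?_) i
    · simp only [Fin.cons_zero]
      exact ⟨⟨h.yL, 0, W0.zero_mem, by simpa using h.vy_lt⟩, h.y0, fun hh =>
        (hvW _ hh).not_gt hvinv⟩
    · simp only [Fin.cons_succ]
      exact ⟨hle (hz.1 i).1, (hz.1 i).2.1, fun hh => (hz.1 i).2.2
        (hWF _ (F.inv_mem (hW.1 _ (hz.1 i).1)) hh)⟩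
  · intro i j hij m
    obtain ⟨j, rfl⟩ := Fin.exists_succ_eq.mpr (Fin.ne_zero_of_lt hij)
    refine Fin.cases (fun _ => ?_) (fun i hij => ?_) i hij
    · simp only [Fin.cons_zero, Fin.cons_succ]
      intro hh
      refine (hvW _ hh).not_gt ?_
      rw [div_eq_mul_inv, map_mul, map_pow, h.vF _ (hW.1 _ (hz.1 j).1) (hz.1 j).2.1, one_pow, one_mul]
      exact hvinv
    · simp only [Fin.cons_succ]
      intro hh
      exact hz.2 i j (Fin.succ_lt_succ_iff.mp hij) m (hWF _ (F.div_mem (F.pow_mem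
        (hW.1 _ (hz.1 j).1) m) (hW.1 _ (hz.1 i).1)) hh)

theorem v_alg (h : Ext F L y v) {x : Ω} (hx : IsAlgebraic F x) : v x ≤ 1 := by
  have hi : IsIntegral F x := hx.isIntegral
  obtain ⟨f, hf, he⟩ := hi
  by_contra hv
  rw [not_le] at hv
  have hx0 : x ≠ 0 := by rintro rfl; simp at hv
  -- the top term dominates
  have e1 : x ^ f.natDegree = - ∑ i ∈ Finset.range f.natDegree, (f.coeff i : Ω) * x ^ i := by
    rw [eval₂_eq_sum_range, Finset.sum_range_succ, hf.coeff_natDegree, map_one, one_mul] at he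
    rw [eq_neg_iff_add_eq_zero, add_comm]
    exact he
  have h1 : v (x ^ f.natDegree) < v (x ^ f.natDegree) := by
    conv_lhs => rw [e1, Valuation.map_neg]
    refine Valuation.map_sum_lt v ((Valuation.ne_zero_iff v).mpr (pow_ne_zero _ hx0)) fun i hi => ?_
    rw [map_mul, map_pow, map_pow]
    refine (mul_le_of_le_one_left' (h.vF' (f.coeff i).2)).trans_lt ?_
    exact pow_lt_pow_right₀ hv (Finset.mem_range.mp hi)
  exact lt_irrefl _ h1

theorem alg_mem (h : Ext F L y v) {x : Ω} (hx : x ∈ L) (ha : IsAlgebraic F x) : x ∈ F := by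
  obtain ⟨c, hc, h1⟩ := h.res hx (h.v_alg ha)
  have ha' : IsAlgebraic F (x - c) := ha.sub (isAlgebraic_algebraMap (⟨c, hc⟩ : F))
  by_cases h0 : x - c = 0
  · rw [sub_eq_zero.mp h0]; exact hc
  · exfalso
    have := h.v_alg ha'.inv
    rw [map_inv₀] at this
    have hv0 : 0 < v (x - c) := zero_lt_iff.mpr ((Valuation.ne_zero_iff v).mpr h0)
    exact this.not_gt ((one_lt_inv₀ hv0).mpr h1)

end Ext
end TowerAux


namespace TowerAux
open WithZero

theorem isAlg_mono {Ω : Type*} [Field Ω] {k k' : Subfield Ω} (hle : k ≤ k') {x : Ω}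
    (ha : IsAlgebraic k x) : IsAlgebraic k' x := by
  obtain ⟨f, hf, he⟩ := ha
  refine ⟨f.map (Subfield.inclusion hle), ?_, ?_⟩
  · rwa [Ne, Polynomial.map_eq_zero]
  · rw [Polynomial.aeval_def, Polynomial.eval₂_map]
    exact he

section MV
variable {σ : Type} {k0 : Type} [Field k0]

open MvPolynomial in
theorem X_prime' (i : σ) : Prime (X i : MvPolynomial σ k0) := by
  exact MvPolynomial.X_prime

/-- the `X i`-adic valuation on polynomials -/
noncomputable def vpol (i : σ) : Valuation (MvPolynomial σ k0) ℤᵐ⁰ := by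
  classical
  exact
  { toFun := fun p => if p = 0 then 0 else exp (-(multiplicity (MvPolynomial.X i) p : ℤ))
    map_zero' := by simp
    map_one' := by
      have : multiplicity (MvPolynomial.X i : MvPolynomial σ k0) 1 = 0 := by
        rw [multiplicity_eq_zero]; exact fun h => (X_prime' i).not_isUnit (isUnit_of_dvd_one h)
      simp [this]
    map_mul' := fun p q => by
      by_cases hp : p = 0
      · simp [hp]
      by_cases hq : q = 0
      · simp [hq]
      rw [if_neg hp, if_neg hq, if_neg (mul_ne_zero hp hq), ← exp_add, multiplicity_mul (X_prime' i)
        (FiniteMultiplicity.of_prime_left (X_prime' i) (mul_ne_zero hp hq))]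
      congr 1; push_cast; ring
    map_add_le_max' := fun p q => by
      by_cases hp : p = 0
      · simp [hp]
      by_cases hq : q = 0
      · simp [hq]
      by_cases hpq : p + q = 0
      · simp [hpq]
      rw [if_neg hp, if_neg hq, if_neg hpq]
      have hf : ∀ {a : MvPolynomial σ k0}, a ≠ 0 → FiniteMultiplicity (MvPolynomial.X i) a :=
        fun h => FiniteMultiplicity.of_prime_left (X_prime' i) h
      have h1 : min (multiplicity (MvPolynomial.X i) p) (multiplicity (MvPolynomial.X i) q) ≤
          multiplicity (MvPolynomial.X i) (p + q) := by
        rw [← (hf hpq).pow_dvd_iff_le_multiplicity]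
        refine dvd_add ?_ ?_
        · rw [(hf hp).pow_dvd_iff_le_multiplicity]; exact min_le_left _ _
        · rw [(hf hq).pow_dvd_iff_le_multiplicity]; exact min_le_right _ _
      rw [le_max_iff, exp_le_exp, exp_le_exp]
      rcases min_le_iff.mp h1 with h | h
      · left; omega
      · right; omega }

theorem vpol_apply (i : σ) {p : MvPolynomial σ k0} (hp : p ≠ 0) :
    vpol i p = exp (-(multiplicity (MvPolynomial.X i) p : ℤ)) := if_neg hp

theorem vpol_supp (i : σ) : nonZeroDivisors (MvPolynomial σ k0) ≤ (vpol (k0 := k0) i).supp.primeCompl := by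
  intro p hp h
  have hp0 : p ≠ 0 := nonZeroDivisors.ne_zero hp
  have := (Valuation.mem_supp_iff _ _).mp h
  rw [vpol_apply i hp0] at this
  exact exp_ne_zero this

/-- the `X i`-adic valuation -/
noncomputable def vv (i : σ) : Valuation (FractionRing (MvPolynomial σ k0)) ℤᵐ⁰ :=
  (vpol (k0 := k0) i).extendToLocalization (vpol_supp i) (FractionRing (MvPolynomial σ k0))

theorem vv_apply (i : σ) (p : MvPolynomial σ k0) : vv i (algebraMap (MvPolynomial σ k0) (FractionRing (MvPolynomial σ k0)) p) = vpol i p :=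
  Valuation.extendToLocalization_apply_map_apply _ _ _ _

noncomputable def xx (k0 : Type) [Field k0] (i : σ) : FractionRing (MvPolynomial σ k0) :=
  algebraMap (MvPolynomial σ k0) (FractionRing (MvPolynomial σ k0)) (MvPolynomial.X i)

noncomputable def bs (σ k0 : Type) [Field k0] : Set (FractionRing (MvPolynomial σ k0)) :=
  Set.range fun c : k0 => algebraMap (MvPolynomial σ k0) (FractionRing (MvPolynomial σ k0)) (MvPolynomial.C c)

theorem vv_x (i : σ) : vv i (xx k0 i) = exp (-1 : ℤ) := by
  rw [xx, vv_apply, vpol_apply i (X_prime' i).ne_zero]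
  rw [multiplicity_self]; rfl

open MvPolynomial in
theorem vv_ring {i : σ} {S : Set σ} (hi : i ∉ S) {z : FractionRing (MvPolynomial σ k0)}
    (hz : z ∈ Subring.closure (bs σ k0 ∪ xx k0 '' S)) (h0 : z ≠ 0) : vv i z = 1 := by
  classical
  let φ : MvPolynomial σ k0 →ₐ[k0] MvPolynomial σ k0 := aeval fun j => if j = i then 0 else X j
  have key : ∃ p : MvPolynomial σ k0, φ p = p ∧ algebraMap (MvPolynomial σ k0) (FractionRing (MvPolynomial σ k0)) p = z := by
    clear h0
    induction hz using Subring.closure_induction with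
    | mem x hx =>
      rcases hx with ⟨c, rfl⟩ | ⟨j, hj, rfl⟩
      · exact ⟨C c, by simp [φ], rfl⟩
      · refine ⟨X j, ?_, rfl⟩
        have : j ≠ i := fun e => hi (e ▸ hj)
        simp [φ, this]
    | zero => exact ⟨0, by simp, by simp⟩
    | one => exact ⟨1, by simp, by simp⟩
    | add x y _ _ h1 h2 =>
      obtain ⟨p, hp, rfl⟩ := h1; obtain ⟨q, hq, rfl⟩ := h2
      exact ⟨p + q, by rw [map_add, hp, hq], by simp⟩
    | neg x _ h1 =>
      obtain ⟨p, hp, rfl⟩ := h1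
      exact ⟨-p, by rw [map_neg, hp], by simp⟩
    | mul x y _ _ h1 h2 =>
      obtain ⟨p, hp, rfl⟩ := h1; obtain ⟨q, hq, rfl⟩ := h2
      exact ⟨p * q, by rw [map_mul, hp, hq], by simp⟩
  obtain ⟨p, hp, rfl⟩ := key
  have hp0 : p ≠ 0 := by rintro rfl; simp at h0
  rw [vv_apply, vpol_apply i hp0, multiplicity_eq_zero.mpr]
  · simp
  · rintro ⟨q, rfl⟩
    apply hp0
    rw [← hp, map_mul]; simp [φ]

theorem vv_kk {i : σ} {S : Set σ} (hi : i ∉ S) {z : FractionRing (MvPolynomial σ k0)}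
    (hz : z ∈ Subfield.closure (bs σ k0 ∪ xx k0 '' S)) (h0 : z ≠ 0) : vv i z = 1 := by
  obtain ⟨a, ha, b, hb, rfl⟩ := Subfield.mem_closure_iff.mp hz
  obtain ⟨ha0, hb0⟩ := div_ne_zero_iff.mp h0
  rw [map_div₀, vv_ring hi ha ha0, vv_ring hi hb hb0, div_one]

end MV

/-- a field with independent variables -/
structure Vars (σ Ω : Type) [Field Ω] where
  B : Set Ω
  x : σ → Ω
  v : σ → Valuation Ω ℤᵐ⁰
  vx : ∀ i, v i (x i) = exp (-1 : ℤ)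
  vB : ∀ i (S : Set σ) z, i ∉ S → z ∈ Subfield.closure (B ∪ x '' S) → z ≠ 0 → v i z = 1

noncomputable def mvVars (σ k0 : Type) [Field k0] : Vars σ (FractionRing (MvPolynomial σ k0)) where
  B := bs σ k0
  x := xx k0
  v := vv
  vx := vv_x
  vB := fun _ _ _ hi hz h0 => vv_kk hi hz h0

namespace Vars
variable {σ Ω : Type} [Field Ω] (V : Vars σ Ω)

/-- rational functions in the variables from `S` -/
def kk (S : Set σ) : Subfield Ω := Subfield.closure (V.B ∪ V.x '' S)

theorem kk_union (S S' : Set σ) :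
    Subfield.closure ((V.kk S : Set Ω) ∪ V.x '' S') =
      V.kk (S ∪ S') := by
  apply le_antisymm
  · rw [Subfield.closure_le]
    rintro x (hx | ⟨i, hi, rfl⟩)
    · refine Subfield.closure_mono ?_ hx
      rintro y (hy | ⟨i, hi, rfl⟩)
      · exact Or.inl hy
      · exact Or.inr ⟨i, Or.inl hi, rfl⟩
    · exact Subfield.subset_closure (Or.inr ⟨i, Or.inr hi, rfl⟩)
  · rw [kk, Subfield.closure_le]
    rintro x (hx | ⟨i, hi | hi, rfl⟩)
    · exact Subfield.subset_closure (Or.inl (Subfield.subset_closure (Or.inl hx)))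
    · exact Subfield.subset_closure (Or.inl (Subfield.subset_closure (Or.inr ⟨i, hi, rfl⟩)))
    · exact Subfield.subset_closure (Or.inr ⟨i, hi, rfl⟩)

theorem kk_mono {S S' : Set σ} (h : S ⊆ S') : V.kk S ≤ V.kk S' := by
  refine Subfield.closure_mono (Set.union_subset_union_right _ (Set.image_mono h))

theorem xx_mem {S : Set σ} {i : σ} (h : i ∈ S) : V.x i ∈ V.kk S :=
  Subfield.subset_closure (Or.inr ⟨i, h, rfl⟩)

theorem ext_kk {i : σ} {S : Set σ} (hi : i ∉ S) :
    Ext (V.kk S) (V.kk (S ∪ {i})) (V.x i) (V.v i) where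
  cl := by rw [← V.kk_union, Set.image_singleton]
  vy := V.vx i
  vF := fun c hc h0 => V.vB i S c hi hc h0

/-- `kk S` is algebraically closed in `kk (S ∪ S')`, `S'` finite -/
theorem alg_kk {S : Set σ} (S' : Set σ) (hS' : S'.Finite) : ∀ {x : Ω},
    x ∈ V.kk (S ∪ S') → IsAlgebraic (V.kk S) x → x ∈ V.kk S := by
  induction S', hS' using Set.Finite.induction_on with
  | empty => intro x hx _; simpa using hx
  | @insert a s _ _ ih =>
    intro x hx ha
    apply ih _ ha
    by_cases has : a ∈ S ∪ s
    · rwa [Set.union_insert, Set.insert_eq_of_mem has] at hx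
    · have e := V.ext_kk has
      apply e.alg_mem
      · rwa [show S ∪ insert a s = S ∪ s ∪ {a} by rw [Set.union_assoc, Set.union_singleton]] at hx
      · exact isAlg_mono (V.kk_mono Set.subset_union_left) ha

/-- existence of long chains of valuation rings -/
theorem comp_kk {S : Set σ} (S' : Set σ) (hS' : S'.Finite) (hd : Disjoint S S') :
    ∃ W : Subring Ω, IsValIn W (V.kk (S ∪ S')) ∧
      (∀ c ∈ V.kk S, c ∈ W) ∧ ∃ z : Fin S'.ncard → Ω, Chain W z := by
  induction S', hS' using Set.Finite.induction_on with
  | empty =>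
    refine ⟨(V.kk S).toSubring, ⟨fun x hx => by simpa using hx, fun x hx => Or.inl (by simpa using hx)⟩,
      fun c hc => hc, ?_⟩
    rw [Set.ncard_empty]
    exact ⟨Fin.elim0, fun i => i.elim0, fun i => i.elim0⟩
  | @insert a s ha hs ih =>
    rw [Set.disjoint_insert_right] at hd
    obtain ⟨W0, hW0, hc0, z, hz⟩ := ih hd.2
    have has : a ∉ S ∪ s := by rintro (h | h); exacts [hd.1 h, ha h]
    obtain ⟨W, hW, hle, -, -, -, z', hz'⟩ := (V.ext_kk has).comp hW0 hz
    rw [Set.ncard_insert_of_notMem ha hs]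
    refine ⟨W, ?_, fun c hc => hle (hc0 c hc), z', hz'⟩
    rwa [show S ∪ insert a s = S ∪ s ∪ {a} by rw [Set.union_assoc, Set.union_singleton]]

end Vars
end TowerAux


namespace TowerAux
open WithZero

section gen
variable {Ω : Type} [Field Ω]

theorem algClosed_of_vals {k F : Subfield Ω} (hk : ∀ c ∈ F, IsAlgebraic k c → c ∈ k)
    (hkF : k ≤ F) {c : Ω} (hc : c ∈ F)
    (h : ∀ W : Subring Ω, IsValIn W F → (∀ z ∈ k, z ∈ W) → c ∈ W) : c ∈ k := by
  apply hk c hc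
  by_contra hna
  have hna' : c ∉ (integralClosure k Ω).toSubring := fun hh => by
    have : IsIntegral k c := hh
    exact hna this.isAlgebraic
  obtain ⟨V, hV, hcV⟩ := Subring.exists_le_valuationSubring_of_isIntegrallyClosedIn hna'
  refine hcV (h (V.toSubring ⊓ F.toSubring) ⟨fun x hx => hx.2, fun x hx => ?_⟩ fun z hz => ⟨?_, hkF hz⟩).1
  · rcases V.mem_or_inv_mem x with h1 | h1
    · exact Or.inl ⟨h1, hx⟩
    · exact Or.inr ⟨h1, F.inv_mem hx⟩
  · exact hV (isIntegral_algebraMap (R := k) (A := Ω) (x := ⟨z, hz⟩))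

theorem chain0 (W : Subring Ω) : Chain W (Fin.elim0 : Fin 0 → Ω) :=
  ⟨fun i => i.elim0, fun i => i.elim0⟩

theorem Ext.clos {F L : Subfield Ω} {y : Ω} {v : Valuation Ω ℤᵐ⁰} (e : Ext F L y v) {k : Subfield Ω}
    (hkF : k ≤ F) (hk : ∀ c ∈ F, IsAlgebraic k c → c ∈ k) {x : Ω} (hx : x ∈ L)
    (h : ∀ W ∈ vals (aSet k L v) L, x ∈ W) : x ∈ aSet k L v := by
  have key : ∀ W0 : Subring Ω, IsValIn W0 F → (∀ z ∈ k, z ∈ W0) →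
      v x ≤ 1 ∧ ∀ c ∈ F, v (x - c) < 1 → c ∈ W0 := by
    intro W0 hW0 hk0
    obtain ⟨W, hW, hle, h1, h2, h3, -⟩ := e.comp hW0 (chain0 W0)
    have hxW : x ∈ W := h W ⟨fun z hz => by
      obtain ⟨hz, c, hc, hv⟩ := hz
      exact h1 z hz c (hk0 c hc) hv, hW⟩
    refine ⟨h3 x hxW, fun c hc hv => h2 c hc ?_⟩
    have : x - c ∈ W := h1 _ (L.sub_mem hx (e.FL hc)) 0 W0.zero_mem (by simpa using hv)
    have := W.sub_mem hxW this
    simpa using this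
  have hv : v x ≤ 1 := (key F.toSubring ⟨fun x hx => hx, fun x hx => Or.inl hx⟩ fun z hz => hkF hz).1
  obtain ⟨c, hc, hvc⟩ := e.res hx hv
  exact ⟨hx, c, algClosed_of_vals hk hkF hc fun W0 hW0 hk0 => (key W0 hW0 hk0).2 c hc hvc, hvc⟩

theorem unit_of {W : Subring Ω} {L : Subfield Ω} (hW : IsValIn W L) {t w : Ω} (ht : t ∈ W)
    (ht' : t⁻¹ ∉ W) (hw : w ∈ W) : 1 + t * w ≠ 0 ∧ (1 + t * w)⁻¹ ∈ W := by
  have ht0 : t ≠ 0 := by rintro rfl; simp [W.zero_mem] at ht'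
  have hinv : ∀ a ∈ W, t * a ≠ 1 := fun a ha e => ht' (by
    rwa [inv_eq_of_mul_eq_one_right e])
  have hu0 : 1 + t * w ≠ 0 := fun e => hinv (-w) (W.neg_mem hw) (by linear_combination -e)
  refine ⟨hu0, ?_⟩
  by_cases hw0 : w = 0
  · simp [hw0, W.one_mem]
  have htw : t * w ∈ W := W.mul_mem ht hw
  have htw0 : t * w ≠ 0 := mul_ne_zero ht0 hw0
  have huW : 1 + t * w ∈ W := W.add_mem W.one_mem htw
  rcases hW.2 (t * w / (1 + t * w)) (L.div_mem (hW.1 _ htw) (hW.1 _ huW)) with h | h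
  · have e : (1 + t * w)⁻¹ = 1 - t * w / (1 + t * w) := by field_simp; ring
    rw [e]; exact W.sub_mem W.one_mem h
  · exfalso
    refine hinv (w * ((t * w / (1 + t * w))⁻¹ - 1)) (W.mul_mem hw (W.sub_mem h W.one_mem)) ?_
    field_simp; ring

theorem mv_eval_mem {W : Subring Ω} {s : ℕ} {y : Fin s → Ω} (hy : ∀ i, y i ∈ W)
    {p : MvPolynomial (Fin s) Ω} (hp : ∀ m, p.coeff m ∈ W) : MvPolynomial.eval y p ∈ W := by
  rw [MvPolynomial.eval_eq]
  exact W.sum_mem fun m _ => W.mul_mem (hp m) (W.prod_mem fun i _ => W.pow_mem (hy i) _)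

theorem chain_indep {W : Subring Ω} {k L : Subfield Ω} (hW : IsValIn W L) (hk : ∀ c ∈ k, c ∈ W) :
    ∀ {s : ℕ} (y : Fin s → Ω), Chain W y → ∀ p : MvPolynomial (Fin s) Ω, (∀ m, p.coeff m ∈ k) →
      p ≠ 0 → MvPolynomial.eval y p ≠ 0 ∧ ∀ g ∈ L, g ≠ 0 → g⁻¹ ∉ W →
        (∀ i m, (y i) ^ m / g ∉ W) → MvPolynomial.eval y p / g ∉ W := by
  intro s
  induction s with
  | zero =>
    intro y _ p hp hp0
    obtain ⟨c, rfl⟩ := MvPolynomial.C_surjective (Fin 0) p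
    have hc0 : c ≠ 0 := by rintro rfl; simp at hp0
    have hc : c ∈ k := by simpa using hp 0
    rw [MvPolynomial.eval_C]
    refine ⟨hc0, fun g hg hg0 hgW _ h => hgW ?_⟩
    have := W.mul_mem (hk _ (k.inv_mem hc)) h
    rwa [div_eq_mul_inv, inv_mul_cancel_left₀ hc0] at this
  | succ s ih =>
    intro y hy p hp hp0
    obtain ⟨y0, y', rfl⟩ : ∃ y0 y', y = Fin.cons y0 y' := ⟨y 0, Fin.tail y, by simp⟩
    have hy' : Chain W y' := ⟨fun i => by simpa using hy.1 i.succ, fun i j hij m => by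
      simpa using hy.2 i.succ j.succ (Fin.succ_lt_succ_iff.mpr hij) m⟩
    obtain ⟨hy0W, hy00, hy0i⟩ : y0 ∈ W ∧ y0 ≠ 0 ∧ y0⁻¹ ∉ W := by simpa using hy.1 0
    have hyy : ∀ i m, (y' i) ^ m / y0 ∉ W := fun i m => by
      simpa using hy.2 0 i.succ (Fin.succ_pos i) m
    set P := MvPolynomial.finSuccEquiv Ω s p with hP
    have hP0 : P ≠ 0 := by rwa [hP, Ne, EmbeddingLike.map_eq_zero_iff]
    have hPc : ∀ i m, (P.coeff i).coeff m ∈ k := fun i m => by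
      rw [hP, MvPolynomial.finSuccEquiv_coeff_coeff]; exact hp _
    obtain ⟨Q, hQ⟩ : ∃ Q, P = Polynomial.X ^ P.natTrailingDegree * Q :=
      (Polynomial.X_pow_dvd_iff (f := P) (n := P.natTrailingDegree)).mpr
        fun d hd => Polynomial.coeff_eq_zero_of_lt_natTrailingDegree hd
    set j := P.natTrailingDegree with hj
    have hQc : ∀ i, Q.coeff i = P.coeff (i + j) := fun i => by
      rw [hQ, mul_comm, Polynomial.coeff_mul_X_pow]
    have hQ0 : Q.coeff 0 ≠ 0 := by
      rw [hQc, zero_add]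
      exact Polynomial.trailingCoeff_nonzero_iff_nonzero.mpr hP0
    obtain ⟨hz0, hz⟩ := ih y' hy' (Q.coeff 0) (fun m => by rw [hQc]; exact hPc _ _) hQ0
    have hev : MvPolynomial.eval (Fin.cons y0 y' : Fin (s + 1) → Ω) p =
        y0 ^ j * (MvPolynomial.eval y' (Q.coeff 0) +
          y0 * (Q.divX.map (MvPolynomial.eval y')).eval y0) := by
      rw [MvPolynomial.eval_eq_eval_mv_eval', ← hP, hQ, Polynomial.map_mul, Polynomial.map_pow,
        Polynomial.map_X, Polynomial.eval_mul, Polynomial.eval_pow, Polynomial.eval_X]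
      congr 1
      conv_lhs => rw [← Polynomial.divX_mul_X_add Q]
      rw [Polynomial.map_add, Polynomial.map_mul, Polynomial.map_X, Polynomial.map_C,
        Polynomial.eval_add, Polynomial.eval_mul, Polynomial.eval_X, Polynomial.eval_C]
      ring
    set z := MvPolynomial.eval y' (Q.coeff 0) with hzdef
    set w := (Q.divX.map (MvPolynomial.eval y')).eval y0 with hwdef
    have hmW : ∀ i, MvPolynomial.eval y' (Q.coeff i) ∈ W := fun i =>
      mv_eval_mem (fun i => (hy'.1 i).1) fun m => hk _ (by rw [hQc]; exact hPc _ _)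
    have hwW : w ∈ W := eval_mem' hy0W fun i => by
      rw [Polynomial.coeff_map, Polynomial.coeff_divX]; exact hmW _
    have hzW : z ∈ W := hmW 0
    have hy0L := hW.1 _ hy0W
    have hzL := hW.1 _ hzW
    have h1 := hz y0 hy0L hy00 hy0i hyy
    have ht : y0 / z ∈ W := by
      rcases hW.2 (z / y0) (L.div_mem hzL hy0L) with h | h
      · exact absurd h h1
      · rwa [inv_div] at h
    obtain ⟨hu0, hu⟩ := unit_of hW ht (by rwa [inv_div]) hwW
    have hev2 : MvPolynomial.eval (Fin.cons y0 y' : Fin (s + 1) → Ω) p =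
        y0 ^ j * z * (1 + y0 / z * w) := by
      rw [hev]; field_simp
    refine ⟨by rw [hev2]; exact mul_ne_zero (mul_ne_zero (pow_ne_zero _ hy00) hz0) hu0, ?_⟩
    intro g hg hg0 hgW hgy h
    refine hgy 0 (j + 1) ?_
    have := W.mul_mem (W.mul_mem h hu) ht
    rw [hev2] at this
    convert this using 1
    simp only [Fin.cons_zero]
    generalize hU : 1 + y0 / z * w = U at *
    field_simp
    ring

open IntermediateField.algebraAdjoinAdjoin in
theorem trdeg_adj {k Ω : Type} [Field k] [Field Ω] [Algebra k Ω] {r : ℕ} (b : Fin r → Ω) :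
    Algebra.trdeg k (IntermediateField.adjoin k (Set.range b)) ≤ r := by
  have : FaithfulSMul k (Algebra.adjoin k (Set.range b)) :=
    (faithfulSMul_iff_algebraMap_injective _ _).mpr (algebraMap k _).injective
  have h3 := trdeg_add_eq k (Algebra.adjoin k (Set.range b))
    (A := IntermediateField.adjoin k (Set.range b))
  rw [trdeg_eq_zero (R := Algebra.adjoin k (Set.range b)), add_zero] at h3
  rw [← h3, Algebra.adjoin_range_eq_range_aeval]
  have h5 := lift_trdeg_le_of_surjective (MvPolynomial.aeval (R := k) b).rangeRestrict
    (AlgHom.rangeRestrict_surjective _)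
  rw [MvPolynomial.trdeg_of_isDomain] at h5
  simpa using h5

theorem trdeg_bound {k : Subfield Ω} {r s : ℕ} (b : Fin r → Ω) (y : Fin s → Ω)
    (hy : ∀ i, y i ∈ Subfield.closure ((k : Set Ω) ∪ Set.range b)) (hi : AlgebraicIndependent k y) :
    s ≤ r := by
  let E := IntermediateField.adjoin k (Set.range b)
  have hE : ∀ i, y i ∈ E := fun i => by
    have : Subfield.closure ((k : Set Ω) ∪ Set.range b) ≤ E.toSubfield := by
      rw [Subfield.closure_le]
      rintro z (hz | hz)
      · exact E.algebraMap_mem ⟨z, hz⟩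
      · exact IntermediateField.subset_adjoin _ _ hz
    exact this (hy i)
  have hi' : AlgebraicIndependent k (fun i => (⟨y i, hE i⟩ : E)) :=
    AlgebraicIndependent.of_comp (f := E.val) hi
  have h1 := hi'.lift_cardinalMk_le_trdeg
  have h4 := h1.trans (Cardinal.lift_le.mpr (trdeg_adj (k := k) b))
  simpa using h4

theorem bound_gen {k L : Subfield Ω} {r s : ℕ} (b : Fin r → Ω)
    (hL : L = Subfield.closure ((k : Set Ω) ∪ Set.range b)) {W : Subring Ω} (hW : IsValIn W L)
    (hk : ∀ c ∈ k, c ∈ W) (y : Fin s → Ω) (hy : Chain W y) : s ≤ r := by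
  refine trdeg_bound (k := k) b y (fun i => hL ▸ hW.1 _ (hy.1 i).1) ?_
  rw [algebraicIndependent_iff]
  intro p hp
  by_contra hp0
  refine (chain_indep hW hk y hy (p.map k.subtype) (fun m => ?_) ?_).1 ?_
  · rw [MvPolynomial.coeff_map]; exact (p.coeff m).2
  · exact fun e => hp0 (MvPolynomial.map_injective _ k.subtype_injective (by rw [e, map_zero]))
  · rw [MvPolynomial.eval_map]; exact hp

end gen
end TowerAux


namespace TowerAux
open WithZero

namespace Vars
variable {r : ℕ} {Ω : Type} [Field Ω] (V : Vars (ℕ ⊕ (Unit ⊕ Fin (r - 1))) Ω)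

def SX (r n : ℕ) : Set (ℕ ⊕ (Unit ⊕ Fin (r - 1))) := {j | ∃ i, 1 ≤ i ∧ i ≤ n ∧ j = Sum.inl i}
def SXU (r : ℕ) : Set (ℕ ⊕ (Unit ⊕ Fin (r - 1))) := {j | ∃ i, 1 ≤ i ∧ j = Sum.inl i}
def SZ (r : ℕ) : Set (ℕ ⊕ (Unit ⊕ Fin (r - 1))) := Set.range fun i => Sum.inr (Sum.inr i)
def iY (r : ℕ) : ℕ ⊕ (Unit ⊕ Fin (r - 1)) := Sum.inr (Sum.inl ())

def kf (n : ℕ) : Subfield Ω := V.kk (SX r n)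
def Ff (n : ℕ) : Subfield Ω := V.kk (SX r n ∪ SZ r)
def Kf (n : ℕ) : Subfield Ω := V.kk (SX r n ∪ SZ r ∪ {iY r})
def TT (n : ℕ) : Ω := (1 + V.x (iY r) * V.x (Sum.inl n)) / V.x (iY r)

theorem iY_not (n : ℕ) : iY r ∉ SX r n ∪ SZ r := by
  rintro (⟨i, -, -, h⟩ | ⟨i, h⟩)
  · simp [iY] at h
  · simp [iY] at h

theorem iY_notU : iY r ∉ SXU r ∪ SZ r := by
  rintro (⟨i, -, h⟩ | ⟨i, h⟩)
  · simp [iY] at h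
  · simp [iY] at h

theorem ext_n (n : ℕ) : Ext (V.Ff n) (V.Kf n) (V.x (iY r)) (V.v (iY r)) := V.ext_kk (iY_not n)

theorem ext_U : Ext (V.kk (SXU r ∪ SZ r)) (V.kk (SXU r ∪ SZ r ∪ {iY r})) (V.x (iY r)) (V.v (iY r)) :=
  V.ext_kk iY_notU

theorem kF (n : ℕ) : V.kf n ≤ V.Ff n := V.kk_mono Set.subset_union_left

theorem SX_mono {m n : ℕ} (h : m ≤ n) : SX r m ⊆ SX r n := by
  rintro _ ⟨i, h1, h2, rfl⟩; exact ⟨i, h1, h2.trans h, rfl⟩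

theorem SX_U (n : ℕ) : SX r n ⊆ SXU r := by
  rintro _ ⟨i, h1, h2, rfl⟩; exact ⟨i, h1, rfl⟩

theorem SZ_finite : (SZ r).Finite := Set.finite_range _

theorem SZ_ncard : (SZ r).ncard = r - 1 := by
  rw [SZ, ← Set.image_univ, Set.ncard_image_of_injective, Set.ncard_univ, Nat.card_eq_fintype_card,
    Fintype.card_fin]
  intro i j h
  simpa using h

theorem vX (i : ℕ) : V.v (iY r) (V.x (Sum.inl i)) = 1 := by
  have hn : iY r ∉ ({Sum.inl i} : Set (ℕ ⊕ (Unit ⊕ Fin (r - 1)))) := by simp [iY]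
  refine V.vB (iY r) {Sum.inl i} _ hn (Subfield.subset_closure (Or.inr ⟨_, rfl, rfl⟩)) ?_
  intro h
  have := V.vx (Sum.inl i)
  rw [h, map_zero] at this
  exact exp_ne_zero this.symm

theorem TT_v (n : ℕ) : V.v (iY r) (V.TT n) = exp (1 : ℤ) := by
  have h1 : V.v (iY r) (V.x (iY r) * V.x (Sum.inl n)) < 1 := by
    rw [map_mul, V.vX, mul_one]; exact (V.ext_n 0).vy_lt
  rw [TT, map_div₀, Valuation.map_one_add_of_lt _ h1, V.vx, one_div, ← exp_neg, neg_neg]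

theorem TT_eq (n : ℕ) : V.TT n = V.x (Sum.inl n) + (V.x (iY r))⁻¹ := by
  have := (V.ext_n 0).y0
  rw [TT]; field_simp; ring

theorem yK (n : ℕ) : V.x (iY r) ∈ V.Kf n := (V.ext_n n).yL

theorem SX_succ (n : ℕ) : SX r (n + 1) = SX r n ∪ {Sum.inl (n + 1)} := by
  ext j
  constructor
  · rintro ⟨i, h1, h2, rfl⟩
    rcases Nat.lt_or_ge n i with h | h
    · right; rw [Set.mem_singleton_iff, show i = n + 1 by omega]
    · exact Or.inl ⟨i, h1, h, rfl⟩
  · rintro (⟨i, h1, h2, rfl⟩ | h)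
    · exact ⟨i, h1, by omega, rfl⟩
    · exact ⟨n + 1, by omega, le_rfl, h⟩

theorem X_not (n : ℕ) : (Sum.inl (n + 1) : ℕ ⊕ (Unit ⊕ Fin (r - 1))) ∉ SX r n ∪ SZ r ∪ {iY r} := by
  rintro ((⟨i, h1, h2, h⟩ | ⟨i, h⟩) | h)
  · have : n + 1 = i := by simpa using h
    omega
  · simp at h
  · simp [iY] at h

theorem ext_X (n : ℕ) : Ext (V.Kf n) (V.Kf (n + 1)) (V.x (Sum.inl (n + 1))) (V.v (Sum.inl (n + 1))) := by
  have := V.ext_kk (X_not (r := r) n)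
  rw [show SX r n ∪ SZ r ∪ {iY r} ∪ {Sum.inl (n + 1)} = SX r (n + 1) ∪ SZ r ∪ {iY r} by
    rw [SX_succ]; ext j; simp only [Set.mem_union]; tauto] at this
  exact this

theorem TT_trans (n : ℕ) : Trans (V.Kf n) (V.TT (n + 1)) := by
  rw [TT_eq]
  exact (V.ext_X n).trans.add ((V.Kf n).inv_mem (V.yK n))

theorem TT_gen (n : ℕ) : GenBy (V.Kf n) (V.Kf (n + 1)) (V.TT (n + 1)) := by
  have h := genBy_closure (V.Kf n) (V.TT (n + 1))
  have e : Subfield.closure ((V.Kf n : Set Ω) ∪ {V.TT (n + 1)}) = V.Kf (n + 1) := by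
    have hy : (V.x (iY r))⁻¹ ∈ V.Kf n := (V.Kf n).inv_mem (V.yK n)
    rw [(V.ext_X n).cl]
    apply le_antisymm
    · rw [Subfield.closure_le]
      rintro z (hz | hz)
      · exact Subfield.subset_closure (Or.inl hz)
      · rw [Set.mem_singleton_iff.mp hz, TT_eq]
        exact add_mem (Subfield.subset_closure (Or.inr rfl)) (Subfield.subset_closure (Or.inl hy))
    · rw [Subfield.closure_le]
      rintro z (hz | hz)
      · exact Subfield.subset_closure (Or.inl hz)
      · have h2 : z = V.TT (n + 1) - (V.x (iY r))⁻¹ := by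
          rw [Set.mem_singleton_iff.mp hz, TT_eq]; ring
        rw [h2]
        exact sub_mem (Subfield.subset_closure (Or.inr rfl)) (Subfield.subset_closure (Or.inl hy))
  rwa [e] at h

theorem kv (n : ℕ) (c : Ω) (hc : c ∈ V.kf n) (h0 : c ≠ 0) : V.v (iY r) c = 1 :=
  (V.ext_n n).vF c (V.kF n hc) h0

theorem Kf_eq (hr : 1 ≤ r) (n : ℕ) : ∃ b : Fin r → Ω,
    V.Kf n = Subfield.closure ((V.kf n : Set Ω) ∪ Set.range b) := by
  refine ⟨fun i => if h : i.1 < r - 1 then V.x (Sum.inr (Sum.inr ⟨i.1, h⟩)) else V.x (iY r), ?_⟩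
  rw [Kf, Set.union_assoc, ← V.kk_union]
  congr 2
  ext z
  constructor
  · rintro ⟨j, ⟨i, rfl⟩ | hj, rfl⟩
    · exact ⟨⟨i.1, by omega⟩, by simp⟩
    · exact ⟨⟨r - 1, by omega⟩, by simp [Set.mem_singleton_iff.mp hj]⟩
  · rintro ⟨i, rfl⟩
    by_cases h : i.1 < r - 1
    · exact ⟨Sum.inr (Sum.inr ⟨i.1, h⟩), Or.inl ⟨_, rfl⟩, by simp [h]⟩
    · exact ⟨iY r, Or.inr rfl, by simp [h]⟩

/-- the tower of the paper -/
def tower (hr : 1 ≤ r) : Tower Ω r where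
  K n := V.Kf (n + 1)
  k n := V.kf (n + 1)
  T n := V.TT (n + 2)
  v := V.v (iY r)
  kK n := (V.kF _).trans (V.ext_n _).FL
  kmono n := V.kk_mono (SX_mono (Nat.le_succ _))
  trans n := V.TT_trans (n + 1)
  gen n := V.TT_gen (n + 1)
  vT n := V.TT_v _
  vk n := V.kv _
  clos n x hx h := (V.ext_n (n + 1)).clos (V.kF _) (fun c hc ha => V.alg_kk (SZ r) SZ_finite hc ha) hx h
  bound n s W hW hk y hy := by
    obtain ⟨b, hb⟩ := V.Kf_eq hr (n + 1)
    exact bound_gen b hb hW hk y hy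
  W1 := by
    have hd : Disjoint (SX r (0 + 1)) (SZ r) := by
      rw [Set.disjoint_left]
      rintro _ ⟨i, -, -, rfl⟩ ⟨j, h⟩
      simp at h
    obtain ⟨W0, hW0, hc0, z, hz⟩ := V.comp_kk (SZ r) SZ_finite hd
    obtain ⟨W, hW, hle, h1, -, -, h2⟩ := (V.ext_n (0 + 1)).comp hW0 hz
    rw [SZ_ncard, Nat.sub_add_cancel hr] at h2
    exact ⟨W, ⟨fun x hx => by
      obtain ⟨hx, c, hc, hv⟩ := hx
      exact h1 x hx c (hc0 c hc) hv, hW⟩, h2⟩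

/-- elements of the union involve only finitely many variables -/
theorem U_mem (S : Set (ℕ ⊕ (Unit ⊕ Fin (r - 1)))) {x : Ω} (hx : x ∈ V.kk (SXU r ∪ S)) :
    ∃ n, x ∈ V.kk (SX r n ∪ S) := by
  have hmono : ∀ {m n : ℕ}, m ≤ n → V.kk (SX r m ∪ S) ≤ V.kk (SX r n ∪ S) := fun h =>
    V.kk_mono (Set.union_subset_union_left _ (SX_mono h))
  have hdir : Directed (· ≤ ·) fun n => V.kk (SX r n ∪ S) := fun m n =>
    ⟨max m n, hmono (le_max_left _ _), hmono (le_max_right _ _)⟩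
  rw [← Subfield.mem_iSup_of_directed hdir]
  refine (Subfield.closure_le.mpr ?_ : V.kk (SXU r ∪ S) ≤ _) hx
  rintro z (hz | ⟨_, ⟨i, h1, rfl⟩ | hi, rfl⟩) <;> rw [SetLike.mem_coe, Subfield.mem_iSup_of_directed hdir]
  · exact ⟨0, Subfield.subset_closure (Or.inl hz)⟩
  · exact ⟨i, V.xx_mem (Or.inl ⟨i, h1, le_rfl, rfl⟩)⟩
  · exact ⟨0, V.xx_mem (Or.inr hi)⟩

end Vars
end TowerAux


namespace TowerAux
open WithZero

section conn
variable (k0 : Type) [Field k0] (r : ℕ)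

noncomputable abbrev VV : Vars (ℕ ⊕ (Unit ⊕ Fin (r - 1))) (Amb k0 r) := mvVars (TowerVars r) k0

theorem kfld_eq (n : ℕ) : kfld k0 r n = (VV k0 r).kf n := by
  have h : {x | ∃ i, 1 ≤ i ∧ i ≤ n ∧ x = ambX k0 r i} = (VV k0 r).x '' Vars.SX r n := by
    ext x
    constructor
    · rintro ⟨i, h1, h2, rfl⟩
      exact ⟨Sum.inl i, ⟨i, h1, h2, rfl⟩, rfl⟩
    · rintro ⟨_, ⟨i, h1, h2, rfl⟩, rfl⟩
      exact ⟨i, h1, h2, rfl⟩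
  rw [kfld, h]
  rfl

theorem ambZ_range : Set.range (ambZ k0 r) = (VV k0 r).x '' Vars.SZ r := by
  ext x
  constructor
  · rintro ⟨i, rfl⟩
    exact ⟨_, ⟨i, rfl⟩, rfl⟩
  · rintro ⟨_, ⟨i, rfl⟩, rfl⟩
    exact ⟨i, rfl⟩

theorem ambY_eq : ambY k0 r = (VV k0 r).x (Vars.iY r) := rfl

theorem Ffld_eq (n : ℕ) : Ffld k0 r n = (VV k0 r).Ff n := by
  rw [Ffld, kfld_eq, ambZ_range]
  exact (VV k0 r).kk_union _ _

theorem Kfld_eq (n : ℕ) : Kfld k0 r n = (VV k0 r).Kf n := by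
  rw [Kfld, Ffld_eq, ambY_eq]
  exact ((VV k0 r).ext_n n).cl.symm

theorem Mset_eq (n : ℕ) (x : Amb k0 r) : x ∈ Mset k0 r n ↔
    x ∈ (VV k0 r).Kf n ∧ (VV k0 r).v (Vars.iY r) x < 1 := by
  rw [← ((VV k0 r).ext_n n).mem_M, Mset, Vset, polyRing, Ffld_eq, ambY_eq]
  rfl

theorem Aset_eq (n : ℕ) : Aset k0 r n =
    aSet ((VV k0 r).kf n) ((VV k0 r).Kf n) ((VV k0 r).v (Vars.iY r)) := by
  have hk : (VV k0 r).kf n ≤ (VV k0 r).Kf n := ((VV k0 r).kF n).trans ((VV k0 r).ext_n n).FL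
  ext x
  constructor
  · rintro ⟨c, hc, m, hm, rfl⟩
    rw [kfld_eq] at hc
    rw [Mset_eq] at hm
    exact ⟨add_mem (hk hc) hm.1, c, hc, by rw [add_sub_cancel_left]; exact hm.2⟩
  · rintro ⟨hx, c, hc, hv⟩
    refine ⟨c, by rw [kfld_eq]; exact hc, x - c, (Mset_eq k0 r n _).mpr ⟨sub_mem hx (hk hc), hv⟩, ?_⟩
    ring

theorem kfldU_eq : kfldU k0 r = ((VV k0 r).kk (Vars.SXU r) : Set (Amb k0 r)) := by
  ext x
  constructor
  · intro h
    obtain ⟨n, hn⟩ := Set.mem_iUnion.mp h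
    rw [kfld_eq] at hn
    exact (VV k0 r).kk_mono (Vars.SX_U n) hn
  · intro h
    have h' : x ∈ (VV k0 r).kk (Vars.SXU r ∪ ∅) := by rw [Set.union_empty]; exact h
    obtain ⟨n, hn⟩ := (VV k0 r).U_mem ∅ h'
    rw [Set.union_empty] at hn
    refine Set.mem_iUnion.mpr ⟨n, ?_⟩
    rw [kfld_eq]; exact hn

theorem FfldU_eq : FfldU k0 r = (VV k0 r).kk (Vars.SXU r ∪ Vars.SZ r) := by
  rw [FfldU, kfldU_eq, ambZ_range]
  exact (VV k0 r).kk_union _ _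

theorem MsetU_eq (x : Amb k0 r) : x ∈ MsetU k0 r ↔
    x ∈ (VV k0 r).kk (Vars.SXU r ∪ Vars.SZ r ∪ {Vars.iY r}) ∧ (VV k0 r).v (Vars.iY r) x < 1 := by
  rw [← ((VV k0 r).ext_U).mem_M, MsetU, VsetU, polyRingU, FfldU_eq, ambY_eq]
  rfl

variable (hr : 1 ≤ r)

noncomputable abbrev tau : Tower (Amb k0 r) r := (VV k0 r).tower hr

theorem Aset_tau (n : ℕ) : Aset k0 r (n + 1) = (tau k0 r hr).A n := Aset_eq k0 r (n + 1)

theorem Kfld_tau (n : ℕ) : Kfld k0 r (n + 1) = (tau k0 r hr).K n := Kfld_eq k0 r (n + 1)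

theorem AsetU_eq : AsetU k0 r = {x | ∃ n, x ∈ (tau k0 r hr).A n} := by
  ext x
  constructor
  · rintro ⟨c, hc, m, hm, rfl⟩
    rw [kfldU_eq] at hc
    rw [MsetU_eq] at hm
    have h1 : c ∈ (VV k0 r).kk (Vars.SXU r ∪ ∅) := by rw [Set.union_empty]; exact hc
    obtain ⟨n1, h1⟩ := (VV k0 r).U_mem ∅ h1
    rw [Set.union_empty] at h1
    have h2 := hm.1
    rw [Set.union_assoc] at h2
    obtain ⟨n2, h2⟩ := (VV k0 r).U_mem _ h2
    rw [← Set.union_assoc] at h2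
    have h1' : c ∈ (VV k0 r).kf (max n1 n2 + 1) := (VV k0 r).kk_mono (Vars.SX_mono (by omega)) h1
    have h2' : m ∈ (VV k0 r).Kf (max n1 n2 + 1) := (VV k0 r).kk_mono
      (Set.union_subset_union_left _ (Set.union_subset_union_left _ (Vars.SX_mono (by omega)))) h2
    refine ⟨max n1 n2, ?_⟩
    rw [← Aset_tau]
    refine ⟨c, by rw [kfld_eq]; exact h1', m, (Mset_eq k0 r _ _).mpr ⟨h2', hm.2⟩, rfl⟩
  · rintro ⟨n, hn⟩
    rw [← Aset_tau] at hn
    obtain ⟨c, hc, m, hm, rfl⟩ := hn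
    rw [kfld_eq] at hc
    rw [Mset_eq] at hm
    refine ⟨c, by rw [kfldU_eq]; exact (VV k0 r).kk_mono (Vars.SX_U _) hc, m,
      (MsetU_eq k0 r _).mpr ⟨(VV k0 r).kk_mono (Set.union_subset_union_left _
        (Set.union_subset_union_left _ (Vars.SX_U _))) hm.1, hm.2⟩, rfl⟩

theorem krSet_eq (D : Set (Amb k0 r)) (L : Subfield (Amb k0 r)) (T : Amb k0 r) :
    krSet k0 r D L T = kr D L T := by
  ext x
  rw [krSet, Set.mem_iInter₂]
  rfl

theorem Dset_eq (n : ℕ) : Dset k0 r (n + 1) = (tau k0 r hr).D n := by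
  induction n with
  | zero => exact Aset_tau k0 r hr 0
  | succ n ih =>
    rw [Tower.D_succ, ← ih, ← Aset_tau, ← Kfld_tau, ← krSet_eq]
    rfl

theorem DsetU_eq : DsetU k0 r = ((tau k0 r hr).DU : Set (Amb k0 r)) := by
  ext x
  rw [DsetU, Set.mem_iUnion, SetLike.mem_coe, Tower.mem_DU]
  constructor
  · rintro ⟨n, hn⟩
    cases n with
    | zero => exact ⟨0, by rw [← Dset_eq]; exact hn⟩
    | succ n => exact ⟨n, by rw [← Dset_eq]; exact hn⟩
  · rintro ⟨n, hn⟩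
    exact ⟨n + 1, by rw [Dset_eq k0 r hr]; exact hn⟩

theorem MMsetU_eq : MMsetU k0 r = (tau k0 r hr).MM := by
  ext x
  rw [MMsetU, Set.mem_iUnion]
  constructor
  · rintro ⟨n, hm, hd⟩
    rw [Mset_eq] at hm
    rw [Dset_eq k0 r hr] at hd
    exact ⟨(Tower.mem_DU _).mpr ⟨_, hd⟩, hm.2⟩
  · rintro ⟨hd, hv⟩
    obtain ⟨n, hn⟩ := (Tower.mem_DU _).mp hd
    have hn' := (tau k0 r hr).Dmono (Nat.le_succ n) hn
    refine ⟨n, (Mset_eq k0 r _ _).mpr ⟨(tau k0 r hr).D_sub_K hn', hv⟩, ?_⟩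
    rw [Dset_eq k0 r hr]; exact hn'

end conn
end TowerAux

namespace TowerAux
open WithZero

namespace Vars
variable {r : ℕ} {Ω : Type} [Field Ω] (V : Vars (ℕ ⊕ (Unit ⊕ Fin (r - 1))) Ω)

theorem z_not_kf (i : Fin (r - 1)) (n : ℕ) : V.x (Sum.inr (Sum.inr i)) ∉ V.kf n := by
  intro h
  have h1 := V.vx (Sum.inr (Sum.inr i))
  have h0 : V.x (Sum.inr (Sum.inr i)) ≠ 0 := by
    intro h0
    rw [h0, map_zero] at h1
    exact exp_ne_zero h1.symm
  have h2 := V.vB (Sum.inr (Sum.inr i)) (SX r n) _ (by rintro ⟨j, -, -, hj⟩; cases hj) h h0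
  rw [h2, ← exp_zero, exp_inj] at h1
  omega

theorem z_Ff (i : Fin (r - 1)) (n : ℕ) : V.x (Sum.inr (Sum.inr i)) ∈ V.Ff n :=
  V.xx_mem (Or.inr ⟨i, rfl⟩)

theorem F_A (n : ℕ) {z : Ω} (hz : z ∈ V.Ff n) (hA : z ∈ aSet (V.kf n) (V.Kf n) (V.v (iY r))) :
    z ∈ V.kf n := by
  obtain ⟨-, c, hc, hv⟩ := hA
  have := (V.ext_n n).F_lt (sub_mem hz (V.kF n hc)) hv
  rw [sub_eq_zero] at this
  rw [this]; exact hc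

end Vars

theorem A_not_ess (k0 : Type) [Field k0] (r : ℕ) (hr : 2 ≤ r) (R : Subring (Amb k0 r))
    (hR : (R : Set (Amb k0 r)) = AsetU k0 r) : ¬ IsEssentialSub k0 r R := by
  have hr1 : 1 ≤ r := by omega
  rintro ⟨Δ, h1, h2, h3⟩
  let i : Fin (r - 1) := ⟨0, by omega⟩
  rw [AsetU_eq k0 r hr1] at hR
  refine (tau k0 r hr1).not_ess (z := (VV k0 r).x (Sum.inr (Sum.inr i)))
    (((VV k0 r).ext_n 1).FL ((VV k0 r).z_Ff i 1)) (fun n h => ?_) (fun n h => ?_) R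
    (fun x => by rw [← SetLike.mem_coe, hR]; rfl) Δ h1 h2 (fun x hx => ?_)
  · exact (VV k0 r).z_not_kf i _ ((VV k0 r).F_A (n + 1) ((VV k0 r).z_Ff i _) h)
  · have h4 := (VV k0 r).F_A (n + 1) (inv_mem ((VV k0 r).z_Ff i _)) h
    have h5 := inv_mem h4
    rw [inv_inv] at h5
    exact (VV k0 r).z_not_kf i _ h5
  · rw [← SetLike.mem_coe, h3]
    exact Set.mem_iInter₂.mpr hx

theorem qf_iff (k0 : Type) [Field k0] (r : ℕ) (hr : 1 ≤ r) (x : Amb k0 r) :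
    x ∈ qfSet k0 r ((tau k0 r hr).DU : Set (Amb k0 r)) ↔ x ∈ (tau k0 r hr).KU :=
  (tau k0 r hr).mem_qf

theorem D_int (k0 : Type) [Field k0] (r : ℕ) (hr : 1 ≤ r) :
    ((tau k0 r hr).DU : Set (Amb k0 r)) =
      ⋂ q ∈ {q : Ideal ↥(tau k0 r hr).DU | q.IsPrime ∧
        Subtype.val '' (q : Set ↥(tau k0 r hr).DU) ≠ (tau k0 r hr).MM},
          locAt k0 r ((tau k0 r hr).DU : Set (Amb k0 r))
            (Subtype.val '' (q : Set ↥(tau k0 r hr).DU)) := by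
  ext x
  rw [Set.mem_iInter₂]
  constructor
  · intro hx q hq
    exact ⟨x, hx, 1, (tau k0 r hr).DU.one_mem, (primeSet_of_ideal q hq.1).one, by simp⟩
  · intro h
    exact (tau k0 r hr).P3 fun P h1 h2 => h P ⟨h1, h2⟩

theorem D_val (k0 : Type) [Field k0] (r : ℕ) (hr : 1 ≤ r) (q : Ideal ↥(tau k0 r hr).DU)
    (hq : q.IsPrime) (hM : Subtype.val '' (q : Set ↥(tau k0 r hr).DU) ≠ (tau k0 r hr).MM)
    (x : Amb k0 r) (hx : x ∈ qfSet k0 r ((tau k0 r hr).DU : Set (Amb k0 r))) :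
    x ∈ locAt k0 r ((tau k0 r hr).DU : Set (Amb k0 r)) (Subtype.val '' (q : Set ↥(tau k0 r hr).DU)) ∨
    x⁻¹ ∈ locAt k0 r ((tau k0 r hr).DU : Set (Amb k0 r))
      (Subtype.val '' (q : Set ↥(tau k0 r hr).DU)) :=
  (tau k0 r hr).P2 (primeSet_of_ideal q hq) hM ((qf_iff k0 r hr x).mp hx)

theorem D_vdim (k0 : Type) [Field k0] (r : ℕ) (hr : 1 ≤ r) :
    subValuativeDim k0 r (tau k0 r hr).DU = (r : WithBot ℕ∞) := by
  apply le_antisymm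
  · refine iSup_le fun W => ?_
    exact (tau k0 r hr).dimW_le W.1 ⟨fun x hx => (qf_iff k0 r hr x).mp (W.2.2.1 hx),
      fun x hx => W.2.2.2 x ((qf_iff k0 r hr x).mpr hx)⟩ W.2.1
  · obtain ⟨W, hW, hD, hd⟩ := (tau k0 r hr).exists_dimW
    exact le_iSup_of_le ⟨W, hD, fun x hx => (qf_iff k0 r hr x).mpr (hW.1 x hx),
      fun x hx => hW.2 x ((qf_iff k0 r hr x).mp hx)⟩ hd

end TowerAux

/-- In the tower construction with `D := ⋃_{n ≥ 1} Dₙ` and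
`𝓜 := ⋃_{n ≥ 2} 𝓜ₙ`: one has `D = ⋂ {D_q : q ∈ Spec(D), q ≠ 𝓜}` inside the quotient
field; consequently `D` is an essential domain (each such `D_q` being a valuation
domain), while its localization `D_𝓜 = A` is not essential, and
`dim(D) = dim_v(D) = r`. -/
theorem tower_D_essential_jaffard_not_locally_essential
    (k0 : Type) [Field k0] (r : ℕ) (hr : 2 ≤ r) :
    (∀ D' : Subring (Amb k0 r), (D' : Set (Amb k0 r)) = DsetU k0 r →
      (DsetU k0 r =
        ⋂ q ∈ {q : Ideal ↥D' | q.IsPrime ∧ Subtype.val '' (q : Set ↥D') ≠ MMsetU k0 r},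
          locAt k0 r (DsetU k0 r) (Subtype.val '' (q : Set ↥D'))) ∧
      (∀ q : Ideal ↥D', q.IsPrime → Subtype.val '' (q : Set ↥D') ≠ MMsetU k0 r →
        ∀ x ∈ qfSet k0 r (DsetU k0 r),
          x ∈ locAt k0 r (DsetU k0 r) (Subtype.val '' (q : Set ↥D')) ∨
          x⁻¹ ∈ locAt k0 r (DsetU k0 r) (Subtype.val '' (q : Set ↥D'))) ∧
      IsEssentialSub k0 r D' ∧
      ringKrullDim ↥D' = (r : WithBot ℕ∞) ∧
      subValuativeDim k0 r D' = (r : WithBot ℕ∞)) ∧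
    locAt k0 r (DsetU k0 r) (MMsetU k0 r) = AsetU k0 r ∧
    (∀ A' : Subring (Amb k0 r), (A' : Set (Amb k0 r)) = AsetU k0 r →
      ¬ IsEssentialSub k0 r A') := by
  have hr1 : 1 ≤ r := by omega
  refine ⟨fun D' hD' => ?_, ?_, fun A' hA' => TowerAux.A_not_ess k0 r hr A' hA'⟩
  · obtain rfl : D' = (TowerAux.tau k0 r hr1).DU :=
      SetLike.coe_injective (hD'.trans (TowerAux.DsetU_eq k0 r hr1))
    rw [TowerAux.DsetU_eq k0 r hr1, TowerAux.MMsetU_eq k0 r hr1]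
    refine ⟨TowerAux.D_int k0 r hr1, fun q hq hM x hx => TowerAux.D_val k0 r hr1 q hq hM x hx, ?_,
      (TowerAux.tau k0 r hr1).dimD hr1, TowerAux.D_vdim k0 r hr1⟩
    exact ⟨_, fun p hp => hp.1, fun p hp x hx => TowerAux.D_val k0 r hr1 p hp.1 hp.2 x hx,
      TowerAux.D_int k0 r hr1⟩
  · rw [TowerAux.DsetU_eq k0 r hr1, TowerAux.MMsetU_eq k0 r hr1, TowerAux.AsetU_eq k0 r hr1]
    exact (TowerAux.tau k0 r hr1).P4
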